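/- Let n be odd, let q ≥ 2, and let 1 ≤ m ≤ n. Then for every choice of admissible parameters, cat(S^m × L^n_q) = n + 1, where S^m is the m-dimensional sphere. -/

import Mathlib

open scoped Topology

/-- The Lusternik–Schnirelmann category of a space (normalized so that contractible spaces
have category 0): the least `k` such that `X` admits an open cover by `k+1` sets, each of
which has nullhomotopic inclusion into `X` (i.e. is contractible in `X`). -/
noncomputable def lsCat (X : Type*) [TopologicalSpace X] : ℕ :=
  sInf {k : ℕ | ∃ U : Fin (k + 1) → Set X,
    (∀ i, IsOpen (U i)) ∧ (⋃ i, U i) = Set.univ ∧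
    ∀ i, ContinuousMap.Nullhomotopic
      (⟨Subtype.val, continuous_subtype_val⟩ : C(U i, X))}

/-- The orbit relation on the unit sphere of `ℂ^k` defining the lens space
`L^{2k-1}_p(ℓ₁,…,ℓ_k)`: a fixed generator of `ℤ/p` acts coordinatewise by
`z_j ↦ exp(2πiℓ_j/p) z_j`, and `m` ranges over the powers of this generator. -/
def lensRel (p k : ℕ) (ℓ : Fin k → ℤ) :
    Metric.sphere (0 : EuclideanSpace ℂ (Fin k)) 1 →
      Metric.sphere (0 : EuclideanSpace ℂ (Fin k)) 1 → Prop :=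
  fun x y => ∃ m : ℤ, ∀ j : Fin k,
    (y.1 j) = Complex.exp (2 * Real.pi * Complex.I * m * ℓ j / p) * (x.1 j)

/-- The lens space `L^{2k-1}_p(ℓ₁,…,ℓ_k)`: the orbit space of the free linear action of `ℤ/p`
on the unit sphere `S^{2k-1} ⊆ ℂ^k` determined by the parameters `ℓ`, with the quotient
topology. -/
noncomputable def LensSpace (p k : ℕ) (ℓ : Fin k → ℤ) : Type :=
  Quot (lensRel p k ℓ)

noncomputable instance (p k : ℕ) (ℓ : Fin k → ℤ) : TopologicalSpace (LensSpace p k ℓ) :=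
  inferInstanceAs (TopologicalSpace (Quot (lensRel p k ℓ)))

namespace LSLens

section chains
variable {R : Type*} [CommRing R] {E : Type*}

lemma supp_map {M : Type*} [AddCommGroup M] [Module R M] (f : (List E →₀ R) →ₗ[R] M)
    (S : Set (List E)) (Q : Submodule R M) (h : ∀ l ∈ S, f (Finsupp.single l 1) ∈ Q)
    {x : List E →₀ R} (hx : x ∈ Finsupp.supported R R S) : f x ∈ Q := by
  rw [Finsupp.supported_eq_span_single] at hx
  have : Submodule.span R ((fun i => Finsupp.single i (1 : R)) '' S) ≤ Q.comap f := by
    rw [Submodule.span_le]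
    rintro _ ⟨l, hl, rfl⟩
    exact h l hl
  exact this hx

lemma supp_eq {M : Type*} [AddCommGroup M] [Module R M] (f g : (List E →₀ R) →ₗ[R] M)
    (S : Set (List E)) (h : ∀ l ∈ S, f (Finsupp.single l 1) = g (Finsupp.single l 1))
    {x : List E →₀ R} (hx : x ∈ Finsupp.supported R R S) : f x = g x := by
  have := supp_map (f - g) S ⊥ (fun l hl => by simp [h l hl]) hx
  simpa [sub_eq_zero] using this

lemma ch_ext {M : Type*} [AddCommGroup M] [Module R M] {f g : (List E →₀ R) →ₗ[R] M}
    (h : ∀ l, f (Finsupp.single l 1) = g (Finsupp.single l 1)) : f = g := by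
  ext l; simpa using h l

lemma single_mem {S : Set (List E)} {l : List E} (h : l ∈ S) :
    (Finsupp.single l (1 : R)) ∈ Finsupp.supported R R S :=
  Finsupp.single_mem_supported R 1 h

/-- The cone operator. -/
noncomputable def cone (a : E) : (List E →₀ R) →ₗ[R] (List E →₀ R) :=
  Finsupp.lmapDomain R R (List.cons a)

lemma cone_single (a : E) (l : List E) (r : R) :
    cone a (Finsupp.single l r) = Finsupp.single (a :: l) r := by
  simp [cone]

/-- Contraction of a list against a weight. -/
noncomputable def conL (w : E → R) : List E → (List E →₀ R)
  | [] => 0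
  | a :: l => w a • Finsupp.single l 1 - cone a (conL w l)

/-- Contraction of a chain against a weight. -/
noncomputable def con (w : E → R) : (List E →₀ R) →ₗ[R] (List E →₀ R) :=
  Finsupp.linearCombination R (conL w)

lemma con_nil (w : E → R) : con w (Finsupp.single [] 1) = 0 := by
  simp [con, conL]

lemma con_cons (w : E → R) (a : E) (l : List E) :
    con w (Finsupp.single (a :: l) 1)
      = w a • Finsupp.single l 1 - cone a (con w (Finsupp.single l 1)) := by
  simp [con, conL]

lemma con_cone (w : E → R) (a : E) (x : List E →₀ R) :
    con w (cone a x) = w a • x - cone a (con w x) := by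
  have : (con w).comp (cone a) = w a • LinearMap.id - (cone a).comp (con w) := by
    apply ch_ext; intro l
    simp only [LinearMap.comp_apply, cone_single, con_cons]
    simp
  simpa using congrArg (fun f => f x) this

lemma con_con (w : E → R) (x : List E →₀ R) : con w (con w x) = 0 := by
  have : (con w).comp (con w) = 0 := by
    apply ch_ext; intro l
    induction l with
    | nil => simp [con_nil]
    | cons a l ih =>
      simp only [LinearMap.comp_apply, LinearMap.zero_apply] at ih ⊢
      rw [con_cons, map_sub, con_cone, map_smul, ih]
      simp
  simpa using congrArg (fun f => f x) this

lemma con_anti (w w' : E → R) (x : List E →₀ R) : con w (con w' x) = - con w' (con w x) := by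
  have : (con w).comp (con w') = - (con w').comp (con w) := by
    apply ch_ext; intro l
    induction l with
    | nil => simp [con_nil]
    | cons a l ih =>
      simp only [LinearMap.comp_apply, LinearMap.neg_apply] at ih ⊢
      rw [con_cons, con_cons, map_sub, map_sub, con_cone, con_cone, map_smul, map_smul, ih]
      simp only [map_neg]
      abel
  simpa using congrArg (fun f => f x) this

/-- The (augmented) boundary operator. -/
noncomputable def bd : (List E →₀ R) →ₗ[R] (List E →₀ R) := con (fun _ => 1)

lemma bd_nil : bd (Finsupp.single ([] : List E) (1 : R)) = 0 := con_nil _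

lemma bd_cons (a : E) (l : List E) :
    bd (Finsupp.single (a :: l) (1 : R))
      = Finsupp.single l 1 - cone a (bd (Finsupp.single l 1)) := by
  simp [bd, con_cons]

lemma bd_cone (a : E) (x : List E →₀ R) : bd (cone a x) = x - cone a (bd x) := by
  simp [bd, con_cone]

lemma bd_bd (x : List E →₀ R) : bd (bd x) = 0 := con_con _ _

/-- Lists in a contraction are sublists of the original one, of length one less. -/
lemma con_supp (w : E → R) (l : List E) :
    con w (Finsupp.single l 1) ∈ Finsupp.supported R R
      {l' | l'.Sublist l ∧ l'.length + 1 = l.length} := by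
  induction l with
  | nil => rw [con_nil]; exact zero_mem _
  | cons a l ih =>
    rw [con_cons]
    refine sub_mem (Submodule.smul_mem _ _ (single_mem ?_)) ?_
    · exact ⟨List.sublist_cons_self a l, rfl⟩
    · refine supp_map (cone a) _ _ ?_ ih
      rintro l' ⟨h1, h2⟩
      rw [cone_single]
      exact single_mem ⟨h1.cons_cons a, by simp [h2]⟩

lemma con_congr (w w' : E → R) (l : List E) (h : ∀ p ∈ l, w p = w' p) :
    con w (Finsupp.single l 1) = con w' (Finsupp.single l 1) := by
  induction l with
  | nil => simp [con_nil]
  | cons a l ih =>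
    rw [con_cons, con_cons, ih (fun p hp => h p (by simp [hp])), h a (by simp)]

lemma con_zero (x : List E →₀ R) : con (fun _ => (0 : R)) x = 0 := by
  have : (con (fun _ : E => (0 : R))) = 0 := by
    apply ch_ext; intro l
    induction l with
    | nil => simp [con_nil]
    | cons a l ih => rw [con_cons, ih]; simp
  simp [this]

lemma con_sum {ι : Type*} (s : Finset ι) (w : ι → E → R) (x : List E →₀ R) :
    con (fun p => ∑ i ∈ s, w i p) x = ∑ i ∈ s, con (w i) x := by
  have : con (fun p => ∑ i ∈ s, w i p) = ∑ i ∈ s, con (w i) := by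
    apply ch_ext; intro l
    induction l with
    | nil => simp [con_nil, LinearMap.sum_apply]
    | cons a l ih =>
      rw [con_cons, ih, LinearMap.sum_apply, LinearMap.sum_apply, map_sum, Finset.sum_smul,
        ← Finset.sum_sub_distrib]
      exact Finset.sum_congr rfl fun i _ => (con_cons _ _ _).symm
  rw [this, LinearMap.sum_apply]

/-- Functoriality. -/
noncomputable def act {E' : Type*} (f : E → E') : (List E →₀ R) →ₗ[R] (List E' →₀ R) :=
  Finsupp.lmapDomain R R (List.map f)

lemma act_single {E' : Type*} (f : E → E') (l : List E) (r : R) :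
    act f (Finsupp.single l r) = Finsupp.single (l.map f) r := by
  simp [act]

lemma act_cone {E' : Type*} (f : E → E') (a : E) (x : List E →₀ R) :
    act f (cone a x) = cone (f a) (act f x) := by
  have : (act (R := R) f).comp (cone a) = (cone (f a)).comp (act f) := by
    apply ch_ext; intro l
    simp [cone_single, act_single]
  simpa using congrArg (fun f => f x) this

lemma con_act {E' : Type*} (f : E → E') (w : E' → R) (x : List E →₀ R) :
    con w (act f x) = act f (con (fun p => w (f p)) x) := by
  have : (con w).comp (act f) = (act f).comp (con (fun p => w (f p))) := by
    apply ch_ext; intro l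
    induction l with
    | nil => simp [con_nil, act_single]
    | cons a l ih =>
      simp only [LinearMap.comp_apply, act_single, List.map_cons, con_cons, map_sub, map_smul,
        act_cone] at ih ⊢
      rw [ih]
  simpa using congrArg (fun f => f x) this

lemma bd_act {E' : Type*} (f : E → E') (x : List E →₀ R) : bd (act f x) = act f (bd x) :=
  con_act _ _ _

lemma act_act {E' E'' : Type*} (f : E → E') (g : E' → E'') (x : List E →₀ R) :
    act g (act f x) = act (g ∘ f) x := by
  have : (act (R := R) g).comp (act f) = act (g ∘ f) := by
    apply ch_ext; intro l
    simp [act_single]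
  simpa using congrArg (fun f => f x) this

/-- Join with a fixed chain on the right. -/
noncomputable def jn (y : List E →₀ R) : (List E →₀ R) →ₗ[R] (List E →₀ R) :=
  Finsupp.linearCombination R (fun l => Finsupp.lmapDomain R R (fun l' => l ++ l') y)

lemma jn_nil (y : List E →₀ R) : jn y (Finsupp.single [] 1) = y := by
  simp only [jn, Finsupp.linearCombination_single, one_smul, List.nil_append,
    Finsupp.lmapDomain_apply]
  exact Finsupp.mapDomain_id

lemma jn_cons (y : List E →₀ R) (a : E) (l : List E) :
    jn y (Finsupp.single (a :: l) 1) = cone a (jn y (Finsupp.single l 1)) := by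
  simp only [jn, Finsupp.linearCombination_single, one_smul, cone, Finsupp.lmapDomain_apply,
    ← Finsupp.mapDomain_comp]
  rfl

lemma jn_cone (y : List E →₀ R) (a : E) (x : List E →₀ R) :
    jn y (cone a x) = cone a (jn y x) := by
  have : (jn y).comp (cone a) = (cone a).comp (jn y) := by
    apply ch_ext; intro l
    simp only [LinearMap.comp_apply, cone_single, jn_cons]
  simpa using congrArg (fun f => f x) this

lemma bd_jn (y : List E →₀ R) (hy : bd y = 0) (x : List E →₀ R) :
    bd (jn y x) = jn y (bd x) := by
  have : bd.comp (jn y) = (jn y).comp bd := by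
    apply ch_ext; intro l
    induction l with
    | nil => simp [bd_nil, jn_nil, hy]
    | cons a l ih =>
      simp only [LinearMap.comp_apply] at ih ⊢
      rw [jn_cons, bd_cone, ih, bd_cons, map_sub, jn_cone]
  simpa using congrArg (fun f => f x) this

lemma act_jn (f : E → E) (y x : List E →₀ R) :
    act f (jn y x) = jn (act f y) (act f x) := by
  have : (act f).comp (jn y) = (jn (act f y)).comp (act f) := by
    apply ch_ext; intro l
    induction l with
    | nil => simp [jn_nil, act_single]
    | cons a l ih =>
      simp only [LinearMap.comp_apply, act_single, List.map_cons, jn_cons, act_cone] at ih ⊢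
      rw [ih]
  simpa using congrArg (fun f => f x) this

lemma jn_supp (y x : List E →₀ R) (S T : Set (List E)) (hy : y ∈ Finsupp.supported R R S)
    (hx : x ∈ Finsupp.supported R R T) :
    jn y x ∈ Finsupp.supported R R {l | ∃ a ∈ T, ∃ b ∈ S, l = a ++ b} := by
  refine supp_map (jn y) _ _ ?_ hx
  intro l hl
  simp only [jn, Finsupp.linearCombination_single, one_smul]
  refine supp_map (Finsupp.lmapDomain R R (fun l' => l ++ l')) _ _ ?_ hy
  intro l' hl'
  simp only [Finsupp.lmapDomain_apply, Finsupp.mapDomain_single]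
  exact single_mem ⟨l, hl, l', hl', rfl⟩

end chains

section detA
variable {R : Type*} [CommRing R] {E : Type*}

/-- The indicator weight of a label. -/
def wt (R : Type*) [CommRing R] (d : E → ℕ) (j : ℕ) : E → R := fun p => if d p = j then 1 else 0

/-- The alternating functional picking the labels `0, …, r-1`. -/
noncomputable def detA (R : Type*) [CommRing R] (d : E → ℕ) : ℕ → ((List E →₀ R) →ₗ[R] R)
  | 0 => Finsupp.lapply []
  | r + 1 => (detA R d r).comp (con (wt R d r))

lemma detA_miss (d : E → ℕ) (r j : ℕ) (hj : j < r) (l : List E) (h : ∀ p ∈ l, d p ≠ j) :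
    detA R d r (Finsupp.single l 1) = 0 := by
  induction r generalizing l with
  | zero => omega
  | succ r ih =>
    simp only [detA, LinearMap.comp_apply]
    by_cases hjr : j = r
    · subst hjr
      rw [con_congr _ (fun _ => 0) l (fun p hp => by simp [wt, h p hp]), con_zero, map_zero]
    · have := supp_map (detA R d r) _ ⊥ (fun l' hl' => ?_) (con_supp (wt R d r) l)
      · simpa using this
      · rw [Submodule.mem_bot]
        exact ih (by omega) l' (fun p hp => h p (hl'.1.subset hp))

lemma detA_con (d : E → ℕ) (r j : ℕ) (hj : j < r) (x : List E →₀ R) :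
    detA R d r (con (wt R d j) x) = 0 := by
  induction r generalizing x with
  | zero => omega
  | succ r ih =>
    simp only [detA, LinearMap.comp_apply]
    by_cases hjr : j = r
    · subst hjr; simp [con_con]
    · rw [con_anti, map_neg, ih (by omega), neg_zero]

lemma detA_bd (d : E → ℕ) (r : ℕ) (l : List E) (h : ∀ p ∈ l, d p < r + 1) :
    detA R d r (bd (Finsupp.single l 1)) = detA R d (r + 1) (Finsupp.single l 1) := by
  have : bd (Finsupp.single l (1 : R))
      = ∑ j ∈ Finset.range (r + 1), con (wt R d j) (Finsupp.single l 1) := by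
    rw [← con_sum, bd]
    apply con_congr
    intro p hp
    simp [wt, h p hp]
  rw [this, map_sum, Finset.sum_range_succ, Finset.sum_eq_zero, zero_add]
  · rfl
  · intro j hj
    exact detA_con d r j (by simpa using hj) _

lemma detA_act (d : E → ℕ) (f : E → E) (hf : ∀ p, d (f p) = d p) (r : ℕ) (x : List E →₀ R) :
    detA R d r (act f x) = detA R d r x := by
  induction r generalizing x with
  | zero =>
    have : (Finsupp.lapply (R := R) ([] : List E)).comp (act f) = Finsupp.lapply [] := by
      apply ch_ext; intro l
      rcases l with _ | ⟨a, l⟩ <;> simp [act_single]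
    simpa [detA] using congrArg (fun f => f x) this
  | succ r ih =>
    simp only [detA, LinearMap.comp_apply]
    rw [con_act, ih]
    have : (fun p => wt R d r (f p)) = wt R d r := by funext p; simp [wt, hf]
    rw [this]

/-- The basic cocycle. -/
noncomputable def alp (R : Type*) [CommRing R] (d : E → ℕ) (r : ℕ) : (List E →₀ R) →ₗ[R] R :=
  (detA R d r).comp bd

lemma alp_miss (d : E → ℕ) (r j : ℕ) (hj : j < r + 1) (l : List E) (hd : ∀ p, d p < r + 1)
    (h : ∀ p ∈ l, d p ≠ j) : alp R d r (Finsupp.single l 1) = 0 := by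
  rw [alp, LinearMap.comp_apply, detA_bd d r l (fun p _ => hd p)]
  exact detA_miss d (r + 1) j hj l h

end detA

end LSLens

namespace LSLens
set_option linter.unusedSectionVars false

section mul
variable {R : Type*} [CommRing R] {E : Type*}

/-- Multiply a cochain by a function of the first vertex. -/
noncomputable def mulL (f : E → R) (Ψ : (List E →₀ R) →ₗ[R] R) : (List E →₀ R) →ₗ[R] R :=
  Finsupp.linearCombination R (fun l => match l with
    | [] => 0
    | p :: l => f p * Ψ (Finsupp.single (p :: l) 1))

/-- Cup with a one-cochain in front. -/
noncomputable def mul2 (g : E → E → R) (Ψ : (List E →₀ R) →ₗ[R] R) : (List E →₀ R) →ₗ[R] R :=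
  Finsupp.linearCombination R (fun l => match l with
    | [] => 0
    | [_] => 0
    | p :: p' :: l => g p p' * Ψ (Finsupp.single (p' :: l) 1))

variable (f : E → R) (g : E → E → R) (Ψ : (List E →₀ R) →ₗ[R] R)

lemma mulL_nil : mulL f Ψ (Finsupp.single [] 1) = 0 := by simp [mulL]
lemma mulL_cons (p : E) (l : List E) : mulL f Ψ (Finsupp.single (p :: l) 1)
    = f p * Ψ (Finsupp.single (p :: l) 1) := by simp [mulL]
lemma mul2_nil : mul2 g Ψ (Finsupp.single [] 1) = 0 := by simp [mul2]
lemma mul2_one (p : E) : mul2 g Ψ (Finsupp.single [p] 1) = 0 := by simp [mul2]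
lemma mul2_cons (p p' : E) (l : List E) : mul2 g Ψ (Finsupp.single (p :: p' :: l) 1)
    = g p p' * Ψ (Finsupp.single (p' :: l) 1) := by simp [mul2]

lemma mulL_cone (p : E) (x : List E →₀ R) : mulL f Ψ (cone p x) = f p * Ψ (cone p x) := by
  have : (mulL f Ψ).comp (cone p) = f p • Ψ.comp (cone p) := by
    apply ch_ext; intro l
    simp [cone_single, mulL_cons]
  simpa using congrArg (fun f => f x) this

lemma mul2_cone (p p' : E) (x : List E →₀ R) :
    mul2 g Ψ (cone p (cone p' x)) = g p p' * Ψ (cone p' x) := by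
  have : (mul2 g Ψ).comp ((cone p).comp (cone p')) = g p p' • Ψ.comp (cone p') := by
    apply ch_ext; intro l
    simp [cone_single, mul2_cons]
  simpa using congrArg (fun f => f x) this

/-- cup with a degree one class -/
noncomputable def xx : (List E →₀ R) →ₗ[R] R := (mulL f Ψ).comp bd
/-- cup with a degree two class -/
noncomputable def yy : (List E →₀ R) →ₗ[R] R := (mul2 g Ψ).comp bd

lemma psi_cone (hΨ : ∀ x, Ψ (bd x) = 0) (p : E) (l : List E) :
    Ψ (cone p (bd (Finsupp.single l 1))) = Ψ (Finsupp.single l 1) := by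
  have h := hΨ (Finsupp.single (p :: l) 1)
  rw [bd_cons, map_sub, sub_eq_zero] at h
  exact h.symm

lemma xx_cons (hΨ : ∀ x, Ψ (bd x) = 0) (p p' : E) (l : List E) :
    xx f Ψ (Finsupp.single (p :: p' :: l) 1)
      = (f p' - f p) * Ψ (Finsupp.single (p' :: l) 1) := by
  rw [xx, LinearMap.comp_apply, bd_cons, map_sub, mulL_cons, mulL_cone, psi_cone Ψ hΨ]
  ring

lemma yy_cons (hΨ : ∀ x, Ψ (bd x) = 0) (p p' p'' : E) (l : List E) :
    yy g Ψ (Finsupp.single (p :: p' :: p'' :: l) 1)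
      = (g p' p'' - g p p'' + g p p') * Ψ (Finsupp.single (p'' :: l) 1) := by
  rw [yy, LinearMap.comp_apply, bd_cons, map_sub, mul2_cons, bd_cons, map_sub, cone_single,
    map_sub, mul2_cons, mul2_cone, psi_cone Ψ hΨ]
  ring

lemma yy_two (p p' : E) : yy g Ψ (Finsupp.single [p, p'] 1) = 0 := by
  rw [yy, LinearMap.comp_apply, bd_cons, map_sub, mul2_one, bd_cons, bd_nil, map_zero, sub_zero,
    cone_single, mul2_one, sub_zero]

lemma yy_one (p : E) : yy g Ψ (Finsupp.single [p] 1) = 0 := by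
  rw [yy, LinearMap.comp_apply, bd_cons, map_sub, bd_nil, map_zero, map_zero, sub_zero, mul2_nil]

lemma yy_nil : yy g Ψ (Finsupp.single [] 1) = 0 := by
  rw [yy, LinearMap.comp_apply, bd_nil, map_zero]

lemma yy_bd (x : List E →₀ R) : yy g Ψ (bd x) = 0 := by
  rw [yy, LinearMap.comp_apply, bd_bd, map_zero]

/-- if Ψ vanishes on all sublists of `l` then so does `yy g Ψ`. -/
lemma yy_sub (l : List E) (h : ∀ l' : List E, l'.Sublist l → Ψ (Finsupp.single l' 1) = 0) :
    yy g Ψ (Finsupp.single l 1) = 0 := by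
  rw [yy, LinearMap.comp_apply]
  have := supp_map (mul2 g Ψ) _ ⊥ (fun l' hl' => ?_) (con_supp (fun _ => (1 : R)) l)
  · exact (Submodule.mem_bot _).1 this
  · rw [Submodule.mem_bot]
    rcases l' with _ | ⟨p, _ | ⟨p', l'⟩⟩
    · exact mul2_nil _ _
    · exact mul2_one _ _ _
    · rw [mul2_cons, h _ ((List.sublist_cons_self p _).trans hl'.1), mul_zero]

end mul

section kap
variable {q : ℕ} [NeZero q]

/-- the comparison function -/
def kap (a b : ZMod q) : ℤ := if b.val < a.val then 1 else 0

lemma kap_eq (a b : ZMod q) : (q : ℤ) * kap a b = (b - a).val - b.val + a.val := by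
  unfold kap
  split_ifs with h
  · have : (b - a).val + a.val = b.val + q := by
      have h1 : ((b - a) + a).val = ((b - a).val + a.val) % q := ZMod.val_add _ _
      rw [sub_add_cancel] at h1
      have h2 := ZMod.val_lt (b - a)
      have h3 := ZMod.val_lt a
      have h4 := ZMod.val_lt b
      by_cases h5 : (b - a).val + a.val < q
      · rw [Nat.mod_eq_of_lt h5] at h1; omega
      · rw [Nat.mod_eq_sub_mod (by omega), Nat.mod_eq_of_lt (by omega)] at h1; omega
    omega
  · rw [ZMod.val_sub (by omega)]; omega

lemma kap_sum (a b : ZMod q) : ((∑ c : ZMod q, kap (a + c) (b + c) : ℤ) : ZMod q) = b - a := by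
  have h : (q : ℤ) * ∑ c : ZMod q, kap (a + c) (b + c) = q * ((b - a).val : ℤ) := by
    rw [Finset.mul_sum]
    simp_rw [kap_eq]
    rw [Finset.sum_add_distrib, Finset.sum_sub_distrib]
    have e : ∀ a : ZMod q, ∑ c : ZMod q, ((a + c).val : ℤ) = ∑ c : ZMod q, (c.val : ℤ) :=
      fun a => Equiv.sum_comp (Equiv.addLeft a) (fun c : ZMod q => (c.val : ℤ))
    rw [e, e]
    simp [ZMod.card]
  have hq : (q : ℤ) ≠ 0 := by exact_mod_cast NeZero.ne q
  rw [mul_left_cancel₀ hq h]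
  simp

/-- the one-cochain -/
def zet {E : Type*} (s t : E → ZMod q) (p p' : E) : ZMod q :=
  ((kap (s p) (t p') - kap (s p') (t p') : ℤ) : ZMod q)

lemma kap_inv (a a' b' b'' c : ZMod q) :
    kap (a' + c) (b'' + c) - kap (a + c) (b'' + c) + kap (a + c) (b' + c) - kap (a' + c) (b' + c)
     = kap a' b'' - kap a b'' + kap a b' - kap a' b' := by
  have hq : (q : ℤ) ≠ 0 := by exact_mod_cast NeZero.ne q
  apply mul_left_cancel₀ hq
  simp only [mul_add, mul_sub, kap_eq, add_sub_add_right_eq_sub]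
  ring

end kap

section Psi
variable {q : ℕ} [NeZero q] {E : Type*} (d : E → ℕ) (M : ℕ) (t : ℕ → E → ZMod q)

/-- the iterated cocycle -/
noncomputable def Psi : ℕ → ((List E →₀ ZMod q) →ₗ[ZMod q] ZMod q)
  | 0 => alp (ZMod q) d M
  | j + 1 => yy (zet (t (2 * j)) (t (2 * j + 1))) (Psi j)

lemma Psi_bd (j : ℕ) (x : List E →₀ ZMod q) : Psi d M t j (bd x) = 0 := by
  cases j with
  | zero => simp [Psi, alp, bd_bd]
  | succ j => exact yy_bd _ _ _

lemma Psi_miss (hd : ∀ p, d p < M + 1) (j i : ℕ) (hi : i < M + 1) (l : List E)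
    (h : ∀ p ∈ l, d p ≠ i) : Psi d M t j (Finsupp.single l 1) = 0 := by
  induction j generalizing l with
  | zero => exact alp_miss d M i hi l hd h
  | succ j ih =>
    apply yy_sub
    intro l' hl'
    exact ih l' fun p hp => h p (hl'.subset hp)

lemma Psi_const (j i : ℕ) (hi : i < 2 * j) (l : List E)
    (h : ∃ c, ∀ p ∈ l, t i p = c) : Psi d M t j (Finsupp.single l 1) = 0 := by
  induction j generalizing l with
  | zero => omega
  | succ j ih =>
    by_cases hij : i < 2 * j
    · apply yy_sub
      intro l' hl'
      obtain ⟨c, hc⟩ := h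
      exact ih hij l' ⟨c, fun p hp => hc p (hl'.subset hp)⟩
    · obtain ⟨c, hc⟩ := h
      rw [Psi]
      rcases l with _ | ⟨p, _ | ⟨p', _ | ⟨p'', l⟩⟩⟩
      · exact yy_nil _ _
      · exact yy_one _ _ _
      · exact yy_two _ _ _ _
      · rw [yy_cons _ _ (Psi_bd d M t j)]
        have h1 := hc p (by simp)
        have h2 := hc p' (by simp)
        have h3 := hc p'' (by simp)
        have : i = 2 * j ∨ i = 2 * j + 1 := by omega
        rcases this with rfl | rfl
        · simp [zet, h1, h2, h3]
        · simp only [zet, h2, h3]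
          push_cast
          ring

variable (g : ZMod q → E → E) (Fx : E → Prop)

lemma Psi_inv (hd : ∀ p, d p < M + 1) (hdg : ∀ c p, d (g c p) = d p)
    (htg : ∀ i c p, ¬ Fx p → t i (g c p) = t i p + c) (j : ℕ) (l : List E)
    (h : (∃ i < M + 1, ∀ p ∈ l, d p ≠ i) ∨ ∀ p ∈ l, ¬ Fx p) (c : ZMod q) :
    Psi d M t j (Finsupp.single (l.map (g c)) 1) = Psi d M t j (Finsupp.single l 1) := by
  rcases h with ⟨i, hi, h⟩ | h
  · rw [Psi_miss d M t hd j i hi l h, Psi_miss d M t hd j i hi]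
    intro p hp
    obtain ⟨p', hp', rfl⟩ := List.mem_map.1 hp
    rw [hdg]; exact h p' hp'
  · induction j generalizing l with
    | zero =>
      rw [Psi, ← act_single, alp, LinearMap.comp_apply, bd_act, detA_act d _ (hdg c)]
      rfl
    | succ j ih =>
      rw [Psi]
      rcases l with _ | ⟨p, _ | ⟨p', _ | ⟨p'', l⟩⟩⟩
      · rfl
      · exact (yy_one _ _ _).trans (yy_one _ _ _).symm
      · exact (yy_two _ _ _ _).trans (yy_two _ _ _ _).symm
      · simp only [List.map_cons]
        rw [yy_cons _ _ (Psi_bd d M t j), yy_cons _ _ (Psi_bd d M t j)]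
        have := ih (p'' :: l) (fun x hx => h x (by simp at hx ⊢; tauto))
        simp only [List.map_cons] at this
        rw [this]
        congr 1
        have h1 := fun i => htg i c p (h p (by simp))
        have h2 := fun i => htg i c p' (h p' (by simp))
        have h3 := fun i => htg i c p'' (h p'' (by simp))
        simp only [zet, h1, h2, h3]
        have := congrArg (Int.cast : ℤ → ZMod q) (kap_inv (t (2 * j) p) (t (2 * j) p')
          (t (2 * j + 1) p') (t (2 * j + 1) p'') c)
        push_cast at this ⊢
        linear_combination this

/-- Smallness of a list. -/
def Small (n : ℕ) (l : List E) : Prop :=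
  (∃ i < M + 1, ∀ p ∈ l, d p ≠ i) ∨ ((∃ i < n, ∃ c, ∀ p ∈ l, t i p = c) ∧ ∀ p ∈ l, ¬ Fx p)

theorem eval_zero (hd : ∀ p, d p < M + 1) (hdg : ∀ c p, d (g c p) = d p)
    (htg : ∀ i c p, ¬ Fx p → t i (g c p) = t i p + c) (K : ℕ)
    (H : ℕ → (List E →₀ ZMod q))
    (hH : ∀ r ≤ 2 * K + 1, H r ∈ Finsupp.supported (ZMod q) (ZMod q)
      {l | Small d M t Fx (2 * K + 1) l ∧ 2 ≤ l.length})
    (h1 : ∀ j ≤ K, bd (H (2 * j + 1)) = act (g 1) (H (2 * j)) - H (2 * j))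
    (h2 : ∀ j < K, bd (H (2 * j + 2)) = ∑ c, act (g c) (H (2 * j + 1))) :
    alp (ZMod q) d M (H 0) = 0 := by
  -- degree one step
  have A : ∀ j ≤ K, ∀ j', ∀ i, xx (t i) (Psi d M t j') (H (2 * j + 1))
      = Psi d M t j' (H (2 * j)) := by
    intro j hj j' i
    rw [xx, LinearMap.comp_apply, h1 j hj, map_sub]
    have := supp_eq ((mulL (t i) (Psi d M t j')).comp (act (g 1)) - mulL (t i) (Psi d M t j'))
      (Psi d M t j') _ ?_ (hH (2 * j) (by omega))
    · simpa using this
    · rintro l ⟨hl, hl2⟩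
      rcases l with _ | ⟨p, l⟩
      · simp at hl2
      have hg : (∃ i < M + 1, ∀ z ∈ p :: l, d z ≠ i) ∨ ∀ z ∈ p :: l, ¬ Fx z := by
        rcases hl with h | h
        · exact Or.inl h
        · exact Or.inr h.2
      have hinv := Psi_inv d M t g Fx hd hdg htg j' _ hg 1
      simp only [LinearMap.sub_apply, LinearMap.comp_apply, act_single, List.map_cons, mulL_cons]
        at hinv ⊢
      rw [hinv]
      rcases hg with ⟨i, hi, h⟩ | h
      · rw [Psi_miss d M t hd j' i hi _ h]; ring
      · rw [htg i 1 p (h p (by simp))]; ring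
  have B : ∀ j < K, Psi d M t (j + 1) (H (2 * j + 2)) = Psi d M t j (H (2 * j)) := by
    intro j hj
    rw [← A j hj.le j (2 * j), Psi, yy, LinearMap.comp_apply, h2 j hj, map_sum]
    have := supp_eq (∑ c, (mul2 (zet (t (2 * j)) (t (2 * j + 1))) (Psi d M t j)).comp (act (g c)))
      (xx (t (2 * j)) (Psi d M t j)) _ ?_ (hH (2 * j + 1) (by omega))
    · simpa [LinearMap.sum_apply] using this
    · rintro l ⟨hl, hl2⟩
      rcases l with _ | ⟨p, _ | ⟨p', l⟩⟩
      · simp at hl2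
      · simp at hl2
      rw [xx_cons _ _ (Psi_bd d M t j)]
      have hg : (∃ i < M + 1, ∀ z ∈ p :: p' :: l, d z ≠ i) ∨ ∀ z ∈ p :: p' :: l, ¬ Fx z := by
        rcases hl with h | h
        · exact Or.inl h
        · exact Or.inr h.2
      have hg' : (∃ i < M + 1, ∀ z ∈ p' :: l, d z ≠ i) ∨ ∀ z ∈ p' :: l, ¬ Fx z := by
        rcases hg with ⟨i, hi, h⟩ | h
        · exact Or.inl ⟨i, hi, fun x hx => h x (List.mem_cons_of_mem _ hx)⟩
        · exact Or.inr fun x hx => h x (List.mem_cons_of_mem _ hx)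
      have hinv := Psi_inv d M t g Fx hd hdg htg j _ hg'
      simp only [LinearMap.sum_apply, LinearMap.comp_apply, act_single, List.map_cons, mul2_cons]
        at hinv ⊢
      simp_rw [hinv]
      rw [← Finset.sum_mul]
      rcases hg with ⟨i, hi, h⟩ | h
      · rw [Psi_miss d M t hd j i hi (p' :: l) (fun x hx => h x (List.mem_cons_of_mem _ hx))]; ring
      · congr 1
        have h1 := fun i c => htg i c p (h p (by simp))
        have h2 := fun i c => htg i c p' (h p' (by simp))
        simp only [zet, h1, h2]
        rw [← Int.cast_sum, Finset.sum_sub_distrib, Int.cast_sub, kap_sum, kap_sum]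
        ring
  have C : ∀ j ≤ K, Psi d M t j (H (2 * j)) = Psi d M t 0 (H 0) := by
    intro j
    induction j with
    | zero => intro _; rfl
    | succ j ih =>
      intro hj
      rw [← ih (by omega)]
      exact B j (by omega)
  have D : xx (t (2 * K)) (Psi d M t K) (H (2 * K + 1)) = 0 := by
    have := supp_map (xx (t (2 * K)) (Psi d M t K)) _ ⊥ (fun l hl => ?_) (hH (2 * K + 1) le_rfl)
    · simpa using this
    · obtain ⟨hl, hl2⟩ := hl
      rw [Submodule.mem_bot]
      rcases l with _ | ⟨p, _ | ⟨p', l⟩⟩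
      · simp at hl2
      · simp at hl2
      rw [xx_cons _ _ (Psi_bd d M t K)]
      rcases hl with ⟨i, hi, h⟩ | ⟨⟨i, hi, c, h⟩, -⟩
      · rw [Psi_miss d M t hd K i hi (p' :: l) (fun x hx => h x (List.mem_cons_of_mem _ hx))]; ring
      · by_cases hiK : i < 2 * K
        · rw [Psi_const d M t K i hiK (p' :: l) ⟨c, fun x hx => h x (List.mem_cons_of_mem _ hx)⟩]
          ring
        · obtain rfl : i = 2 * K := by omega
          rw [h p (by simp), h p' (by simp)]; ring
  have := C K le_rfl
  rw [← A K le_rfl K (2 * K), D] at this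
  exact this.symm

end Psi

end LSLens

namespace LSLens
set_option linter.unusedSectionVars false

section sd
variable {R : Type*} [CommRing R] {E : Type*} [NormedAddCommGroup E] [NormedSpace ℝ E]

/-- barycenter of a list -/
noncomputable def bary (l : List E) : E := (l.length : ℝ)⁻¹ • l.sum

/-- subdivision of a list, with fuel -/
noncomputable def sdF (R : Type*) [CommRing R] : ℕ → List E → (List E →₀ R)
  | 0, l => Finsupp.single l 1
  | k + 1, l => cone (bary l) (Finsupp.linearCombination R (sdF R k) (bd (Finsupp.single l 1)))

/-- barycentric subdivision -/
noncomputable def sd (R : Type*) [CommRing R] : (List E →₀ R) →ₗ[R] (List E →₀ R) :=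
  Finsupp.linearCombination R (fun l => sdF R l.length l)

lemma sd_nil : sd R (Finsupp.single ([] : List E) 1) = Finsupp.single [] 1 := by
  simp [sd, sdF]

lemma sd_cons (l : List E) (hl : l ≠ []) :
    sd R (Finsupp.single l 1) = cone (bary l) (sd R (bd (Finsupp.single l 1))) := by
  obtain ⟨k, hk⟩ : ∃ k, l.length = k + 1 := ⟨l.length - 1, by
    have := List.length_pos_of_ne_nil hl; omega⟩
  have h1 : sd R (Finsupp.single l 1) = sdF R l.length l := by simp [sd]
  rw [h1, hk, sdF]
  congr 1
  refine supp_eq _ _ _ ?_ (con_supp (fun _ => (1 : R)) l)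
  rintro l' ⟨-, h⟩
  have : l'.length = k := by omega
  simp [sd, this]

lemma sd_bd (x : List E →₀ R) : bd (sd R x) = sd R (bd x) := by
  have : (bd).comp (sd R) = (sd R).comp (bd (E := E)) := by
    apply ch_ext; intro l
    induction h : l.length generalizing l with
    | zero =>
      obtain rfl := List.length_eq_zero_iff.1 h
      simp [sd_nil, bd_nil]
    | succ k ih =>
      have hl : l ≠ [] := by rintro rfl; simp at h
      rw [LinearMap.comp_apply, sd_cons l hl, bd_cone]
      have : bd (sd R (bd (Finsupp.single l 1))) = sd R (bd (bd (Finsupp.single l (1 : R)))) := by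
        have key := supp_eq (bd.comp (sd R)) ((sd R).comp bd)
          {l' | l'.Sublist l ∧ l'.length + 1 = l.length}
          (fun l' hl' => ih l' (by have := hl'.2; omega))
          (x := bd (Finsupp.single l (1 : R))) (con_supp (fun _ => (1 : R)) l)
        simpa only [LinearMap.comp_apply] using key
      rw [this, bd_bd, map_zero, map_zero, sub_zero, LinearMap.comp_apply]
  simpa using congrArg (fun f => f x) this

lemma bary_map (f : E →ₗ[ℝ] E) (l : List E) : bary (l.map f) = f (bary l) := by
  simp [bary, map_list_sum]

lemma sd_act (f : E →ₗ[ℝ] E) (x : List E →₀ R) : sd R (act f x) = act f (sd R x) := by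
  have : (sd R).comp (act f) = (act f).comp (sd R) := by
    apply ch_ext; intro l
    induction h : l.length generalizing l with
    | zero =>
      obtain rfl := List.length_eq_zero_iff.1 h
      simp [sd_nil, act_single]
    | succ k ih =>
      have hl : l ≠ [] := by rintro rfl; simp at h
      rw [LinearMap.comp_apply, act_single, sd_cons _ (by simpa using hl), LinearMap.comp_apply,
        sd_cons l hl, act_cone, bary_map, ← act_single, bd_act]
      congr 1
      refine supp_eq ((sd R).comp (act f)) ((act f).comp (sd R)) _ ?_
        (con_supp (fun _ => (1 : R)) l)
      rintro l' ⟨-, h'⟩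
      exact ih l' (by omega)
  simpa using congrArg (fun f => f x) this

lemma bary_mem (l : List E) (hl : l ≠ []) (C : Set E) (hC : Convex ℝ C) (h : ∀ p ∈ l, p ∈ C) :
    bary l ∈ C := by
  have hpos := List.length_pos_of_ne_nil hl
  have key := hC.sum_mem (t := Finset.univ) (w := fun _ : Fin l.length => (l.length : ℝ)⁻¹)
    (z := fun i => l.get i) (fun _ _ => by positivity) (by simp; field_simp)
    (fun i _ => h _ (List.get_mem _ _))
  rw [← Finset.smul_sum] at key
  rw [bary]
  convert key using 2
  rw [← List.sum_ofFn, List.ofFn_get]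

lemma bary_dist (l : List E) (D : ℝ) (hD : ∀ p ∈ l, ∀ p' ∈ l, dist p p' ≤ D) (v : E)
    (hv : v ∈ l) : dist v (bary l) ≤ (1 - (l.length : ℝ)⁻¹) * D := by
  have hl : l ≠ [] := by rintro rfl; simp at hv
  have hpos : (0 : ℝ) < l.length := by exact_mod_cast List.length_pos_of_ne_nil hl
  obtain ⟨i, rfl⟩ := List.get_of_mem hv
  have e : l.sum = ∑ j : Fin l.length, l.get j := by
    rw [← List.sum_ofFn, List.ofFn_get]
  have e2 : l.get i - bary l = (l.length : ℝ)⁻¹ • ∑ j : Fin l.length, (l.get i - l.get j) := by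
    rw [Finset.sum_sub_distrib, bary, e, smul_sub]
    simp only [Finset.sum_const, Finset.card_univ, Fintype.card_fin]
    rw [← Nat.cast_smul_eq_nsmul ℝ, smul_smul, inv_mul_cancel₀ hpos.ne', one_smul]
  rw [dist_eq_norm, e2, norm_smul, norm_inv, Real.norm_natCast]
  have : ‖∑ j : Fin l.length, (l.get i - l.get j)‖ ≤ (l.length - 1) * D := by
    rw [← Finset.add_sum_erase _ _ (Finset.mem_univ i), sub_self, zero_add]
    refine (norm_sum_le_of_le _ (f := fun j => l.get i - l.get j) (n := fun _ => D) ?_).trans ?_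
    · intro j _
      rw [← dist_eq_norm]; exact hD _ (List.get_mem _ _) _ (List.get_mem _ _)
    · rw [Finset.sum_const, Finset.card_erase_of_mem (Finset.mem_univ i), Finset.card_univ,
        Fintype.card_fin, nsmul_eq_mul]
      have : 1 ≤ l.length := List.length_pos_of_ne_nil hl
      push_cast [this]
      exact le_rfl
  calc (l.length : ℝ)⁻¹ * ‖∑ j : Fin l.length, (l.get i - l.get j)‖
      ≤ (l.length : ℝ)⁻¹ * ((l.length - 1) * D) := by gcongr
    _ = _ := by field_simp

/-- the relation between a list and the pieces of its subdivision -/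
def SubOf (ρ : ℝ) (L : ℕ) (l l' : List E) : Prop :=
  l'.length = l.length ∧ (∀ C : Set E, Convex ℝ C → (∀ p ∈ l, p ∈ C) → ∀ p ∈ l', p ∈ C) ∧
    (l.length ≤ L → ∀ D, (∀ p ∈ l, ∀ p' ∈ l, dist p p' ≤ D) → ∀ p ∈ l', ∀ p' ∈ l',
      dist p p' ≤ ρ * D)

lemma sd_supp (L : ℕ) (hL : 1 ≤ L) (l : List E) : sd R (Finsupp.single l 1) ∈
    Finsupp.supported R R {l' | SubOf (1 - (L : ℝ)⁻¹) L l l'} := by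
  induction h : l.length generalizing l with
  | zero =>
    obtain rfl := List.length_eq_zero_iff.1 h
    rw [sd_nil]
    apply single_mem
    exact ⟨rfl, by simp, by simp⟩
  | succ k ih =>
    have hl : l ≠ [] := by rintro rfl; simp at h
    rw [sd_cons l hl]
    have h1 : sd R (bd (Finsupp.single l (1 : R))) ∈ Finsupp.supported R R
        {l'' | ∃ l', l'.Sublist l ∧ l'.length + 1 = l.length ∧ SubOf (1 - (L : ℝ)⁻¹) L l' l''} := by
      refine supp_map (sd R) _ _ ?_ (con_supp (fun _ => (1 : R)) l)
      rintro l' ⟨h1, h2⟩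
      refine Finsupp.supported_mono ?_ (ih l' (by omega))
      intro l'' hl''
      exact ⟨l', h1, h2, hl''⟩
    refine supp_map (cone (bary l)) _ _ ?_ h1
    rintro l'' ⟨l', hs, hlen, hlen', hC, hD⟩
    rw [cone_single]
    apply single_mem
    refine ⟨by simp [hlen', hlen], ?_, ?_⟩
    · intro C hCc hCl p hp
      rcases List.mem_cons.1 hp with rfl | hp
      · exact bary_mem l hl C hCc hCl
      · exact hC C hCc (fun p hp => hCl p (hs.subset hp)) p hp
    · intro hlL D hDl
      have hLpos : (0 : ℝ) < L := by exact_mod_cast hL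
      have hD0 : 0 ≤ D := by
        obtain ⟨v, hv⟩ := List.exists_mem_of_ne_nil l hl
        exact dist_nonneg.trans (hDl v hv v hv)
      have hlp : (0 : ℝ) < l.length := by exact_mod_cast List.length_pos_of_ne_nil hl
      have hρ : (1 - (l.length : ℝ)⁻¹) * D ≤ (1 - (L : ℝ)⁻¹) * D := by
        gcongr
      have hρ0 : 0 ≤ (1 - (L : ℝ)⁻¹) * D := by
        refine mul_nonneg ?_ hD0
        have : (1 : ℝ) ≤ L := by exact_mod_cast hL
        have := inv_le_one_of_one_le₀ this
        linarith
      have hb : ∀ p ∈ l'', dist p (bary l) ≤ (1 - (L : ℝ)⁻¹) * D := by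
        intro p hp
        refine hC (Metric.closedBall (bary l) ((1 - (L : ℝ)⁻¹) * D)) (convex_closedBall _ _) ?_ p hp
        intro v hv
        exact (bary_dist l D hDl v (hs.subset hv)).trans hρ
      intro p hp p' hp'
      rcases List.mem_cons.1 hp with rfl | hp
      · rcases List.mem_cons.1 hp' with rfl | hp'
        · simpa using hρ0
        · rw [dist_comm]; exact hb _ hp'
      · rcases List.mem_cons.1 hp' with rfl | hp'
        · exact hb _ hp
        · exact hD (by omega) D (fun a ha b hb => hDl a (hs.subset ha) b (hs.subset hb)) p hp p' hp'

/-- iterated subdivision -/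
noncomputable def sdN (R : Type*) [CommRing R] : ℕ → ((List E →₀ R) →ₗ[R] (List E →₀ R))
  | 0 => LinearMap.id
  | N + 1 => (sd R).comp (sdN R N)

lemma sdN_bd (N : ℕ) (x : List E →₀ R) : bd (sdN R N x) = sdN R N (bd x) := by
  induction N with
  | zero => rfl
  | succ N ih => simp [sdN, sd_bd, ih]

lemma sdN_nil (N : ℕ) : sdN R N (Finsupp.single ([] : List E) 1) = Finsupp.single [] 1 := by
  induction N with
  | zero => rfl
  | succ N ih => simp [sdN, ih, sd_nil]

lemma sdN_act (N : ℕ) (f : E →ₗ[ℝ] E) (x : List E →₀ R) :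
    sdN R N (act f x) = act f (sdN R N x) := by
  induction N with
  | zero => rfl
  | succ N ih => simp [sdN, sd_act, ih]

lemma sdN_supp (N L : ℕ) (hL : 1 ≤ L) (l : List E) : sdN R N (Finsupp.single l 1) ∈
    Finsupp.supported R R {l' | SubOf ((1 - (L : ℝ)⁻¹) ^ N) L l l'} := by
  induction N with
  | zero =>
    apply single_mem
    exact ⟨rfl, fun C _ h => h, fun _ D hD => by simpa using hD⟩
  | succ N ih =>
    rw [sdN, LinearMap.comp_apply]
    refine supp_map (sd R) _ _ ?_ ih
    rintro l' ⟨h1, h2, h3⟩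
    refine Finsupp.supported_mono ?_ (sd_supp L hL l')
    rintro l'' ⟨h1', h2', h3'⟩
    refine ⟨h1'.trans h1, fun C hC h => h2' C hC (h2 C hC h), fun hlL D hD => ?_⟩
    have := h3' (by omega) _ (h3 hlL D hD)
    rw [pow_succ', mul_assoc]
    exact this

end sd
end LSLens

namespace LSLens
set_option linter.unusedSectionVars false

section tower
variable {q : ℕ} [NeZero q] {E : Type*} (g : ZMod q → E → E) (v w : ℕ → E)
  (Z : List E →₀ ZMod q)

/-- the arc -/
noncomputable def arc (j : ℕ) : List E →₀ ZMod q :=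
  Finsupp.single [v j, w j] 1 + Finsupp.single [w j, g 1 (v j)] 1

/-- the cycles -/
noncomputable def CC : ℕ → (List E →₀ ZMod q)
  | 0 => Z
  | j + 1 => jn (CC j) (∑ c, act (g c) (arc g v w j))

/-- even chains -/
noncomputable def He (j : ℕ) : List E →₀ ZMod q := jn (CC g v w Z j) (Finsupp.single [v j] 1)
/-- odd chains -/
noncomputable def Ho (j : ℕ) : List E →₀ ZMod q := jn (CC g v w Z j) (arc g v w j)

lemma bd_one (p : E) : bd (Finsupp.single [p] (1 : ZMod q)) = Finsupp.single [] 1 := by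
  rw [bd_cons, bd_nil, map_zero, sub_zero]

lemma bd_two (p p' : E) : bd (Finsupp.single [p, p'] (1 : ZMod q))
    = Finsupp.single [p'] 1 - Finsupp.single [p] 1 := by
  rw [bd_cons, bd_one, cone_single]

lemma bd_arc (j : ℕ) : bd (arc g v w j)
    = Finsupp.single [g 1 (v j)] 1 - Finsupp.single [v j] 1 := by
  rw [arc, map_add, bd_two, bd_two]; abel

lemma CC_act (hg : ∀ c c' p, g c (g c' p) = g (c + c') p)
    (hZ : ∀ c, act (g c) Z = Z) (j : ℕ) (c : ZMod q) :
    act (g c) (CC g v w Z j) = CC g v w Z j := by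
  induction j with
  | zero => exact hZ c
  | succ j ih =>
    rw [CC, act_jn, ih, map_sum]
    congr 1
    have : ∀ c', act (g c) (act (g c') (arc g v w j)) = act (g (c + c')) (arc g v w j) := by
      intro c'
      rw [act_act]
      congr 2
      funext p; exact hg c c' p
    simp_rw [this]
    exact Equiv.sum_comp (Equiv.addLeft c) (fun c => act (g c) (arc g v w j))

lemma CC_bd (hg : ∀ c c' p, g c (g c' p) = g (c + c') p)
    (hZ : bd Z = 0) (j : ℕ) : bd (CC g v w Z j) = 0 := by
  induction j with
  | zero => exact hZ
  | succ j ih =>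
    rw [CC, bd_jn _ ih, map_sum]
    have : ∀ c, bd (act (g c) (arc g v w j)) = Finsupp.single [g (c + 1) (v j)] 1
        - Finsupp.single [g c (v j)] 1 := by
      intro c
      rw [bd_act, bd_arc, map_sub, act_single, act_single]
      simp [hg]
    simp_rw [this]
    rw [Finset.sum_sub_distrib]
    have e : ∑ c, Finsupp.single [g (c + 1) (v j)] (1 : ZMod q)
        = ∑ c, Finsupp.single [g c (v j)] (1 : ZMod q) :=
      Equiv.sum_comp (Equiv.addRight (1 : ZMod q))
        (fun c => Finsupp.single [g c (v j)] (1 : ZMod q))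
    rw [e, sub_self, map_zero]

lemma He_bd (hg : ∀ c c' p, g c (g c' p) = g (c + c') p)
    (hZ : bd Z = 0) (j : ℕ) : bd (He g v w Z j) = CC g v w Z j := by
  rw [He, bd_jn _ (CC_bd g v w Z hg hZ j), bd_one, jn_nil]

lemma Ho_bd (hg : ∀ c c' p, g c (g c' p) = g (c + c') p)
    (hZ : bd Z = 0) (hZ' : ∀ c, act (g c) Z = Z) (j : ℕ) :
    bd (Ho g v w Z j) = act (g 1) (He g v w Z j) - He g v w Z j := by
  rw [Ho, bd_jn _ (CC_bd g v w Z hg hZ j), bd_arc, map_sub, He, act_jn,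
    CC_act g v w Z hg hZ', act_single]
  rfl

lemma CC_succ (hg : ∀ c c' p, g c (g c' p) = g (c + c') p)
    (hZ' : ∀ c, act (g c) Z = Z) (j : ℕ) :
    CC g v w Z (j + 1) = ∑ c, act (g c) (Ho g v w Z j) := by
  rw [CC, map_sum]
  refine Finset.sum_congr rfl fun c _ => ?_
  rw [Ho, act_jn, CC_act g v w Z hg hZ']

end tower

section geom

/-- the ambient space -/
abbrev EE (m k : ℕ) := EuclideanSpace ℝ (Fin (m + 1)) × EuclideanSpace ℂ (Fin k)

variable (q m k : ℕ) [NeZero q] (ℓ : Fin k → ℤ)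

/-- the rotation -/
noncomputable def rot (c : ZMod q) : EuclideanSpace ℂ (Fin k) →ₗ[ℝ] EuclideanSpace ℂ (Fin k) where
  toFun b := WithLp.toLp 2 fun j => ZMod.stdAddChar (c * (ℓ j : ZMod q)) * b j
  map_add' a b := by ext j; simp [mul_add]
  map_smul' r b := by ext j; simp; ring

lemma rot_apply (c : ZMod q) (b : EuclideanSpace ℂ (Fin k)) (j : Fin k) :
    rot q k ℓ c b j = ZMod.stdAddChar (c * (ℓ j : ZMod q)) * b j := rfl

lemma rot_rot (c c' : ZMod q) (b : EuclideanSpace ℂ (Fin k)) :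
    rot q k ℓ c (rot q k ℓ c' b) = rot q k ℓ (c + c') b := by
  ext j; simp only [rot_apply, add_mul, AddChar.map_add_eq_mul]; ring

lemma rot_zero (b : EuclideanSpace ℂ (Fin k)) : rot q k ℓ 0 b = b := by
  ext j; simp [rot_apply]

/-- the action -/
noncomputable def gg (c : ZMod q) : EE m k →ₗ[ℝ] EE m k := LinearMap.prodMap LinearMap.id (rot q k ℓ c)

/-- the simplex vertices -/
noncomputable def VV (j : ℕ) : EE m k :=
  (WithLp.toLp 2 fun i => if j < m + 1 then (if (i : ℕ) = j then 1 else 0) else -1, 0)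

/-- vertex lists -/
noncomputable def sg : ℕ → List (EE m k)
  | 0 => []
  | r + 1 => VV m k r :: sg r

lemma sg_eq (r : ℕ) : sg m k r = (List.range r).reverse.map (VV m k) := by
  induction r with
  | zero => rfl
  | succ r ih => rw [sg, ih, List.range_succ]; simp

lemma sg_miss (r : ℕ) (l : List (EE m k)) (hl : l.Sublist (sg m k r)) (h : l.length < r) :
    ∃ j < r, ∀ p ∈ l, ∃ i < r, i ≠ j ∧ p = VV m k i := by
  rw [sg_eq, List.sublist_map_iff] at hl
  obtain ⟨l0, h0, rfl⟩ := hl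
  have : ∃ j ∈ Finset.range r, j ∉ l0.toFinset := by
    by_contra! hc
    have h1 := Finset.card_le_card (show Finset.range r ⊆ l0.toFinset from hc)
    have h2 := List.toFinset_card_le l0
    simp at h1 h
    omega
  obtain ⟨j, hj, hj'⟩ := this
  refine ⟨j, by simpa using hj, ?_⟩
  intro p hp
  obtain ⟨i, hi, rfl⟩ := List.mem_map.1 hp
  refine ⟨i, by simpa using h0.subset hi, ?_, rfl⟩
  rintro rfl
  exact hj' (by simpa using hi)

/-- the sum functional -/
noncomputable def sumF : EE m k →ₗ[ℝ] ℝ where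
  toFun p := ∑ i, p.1 i
  map_add' a b := by simp [Finset.sum_add_distrib]
  map_smul' r b := by simp [Finset.mul_sum]

/-- coordinate functional -/
noncomputable def coF (j : Fin (m + 1)) : EE m k →ₗ[ℝ] ℝ where
  toFun p := p.1 j
  map_add' a b := by simp
  map_smul' r b := by simp

lemma sumF_apply (p : EE m k) : sumF m k p = ∑ i, p.1 i := rfl

lemma coF_apply (j : Fin (m + 1)) (p : EE m k) : coF m k j p = p.1 j := rfl

lemma coF_VV (j : Fin (m + 1)) (i : ℕ) :
    coF m k j (VV m k i) = if i < m + 1 then (if (j : ℕ) = i then 1 else 0) else -1 := rfl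

lemma sumF_VV (i : ℕ) : sumF m k (VV m k i) = if i < m + 1 then 1 else -(m + 1 : ℝ) := by
  simp only [sumF_apply, VV]
  split_ifs with h
  · rw [Finset.sum_eq_single (⟨i, h⟩ : Fin (m + 1))]
    · simp
    · intro b _ hb
      simp only [ite_eq_right_iff, one_ne_zero, imp_false]
      intro h'; exact hb (Fin.ext h')
    · simp
  · simp

lemma posV (j : ℕ) (hj : j < m + 2) : ∃ Λ : EE m k →ₗ[ℝ] ℝ, ∀ i < m + 2, i ≠ j →
    0 < Λ (VV m k i) := by
  by_cases hjm : j < m + 1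
  · refine ⟨sumF m k - (m + 2 : ℝ) • coF m k ⟨j, hjm⟩, fun i hi hij => ?_⟩
    simp only [LinearMap.sub_apply, LinearMap.smul_apply, sumF_VV, coF_VV]
    split_ifs with h1 h2
    · exact absurd h2.symm hij
    · simp
    · simp
  · refine ⟨sumF m k, fun i hi hij => ?_⟩
    rw [sumF_VV, if_pos (by omega)]; exact one_pos

variable (d : EE m k → ℕ)

/-- boundary behaviour of labels -/
def LabBd : Prop := ∀ p : EE m k, p.2 = 0 → p.1 ≠ 0 →
  (∀ h : d p < m + 1, 0 < p.1 ⟨d p, h⟩) ∧ (d p = m + 1 → ∑ i, p.1 i < 0)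

lemma VV_snd (i : ℕ) : (VV m k i).2 = 0 := rfl

lemma miss_face (hlab : LabBd m k d) (N j : ℕ) (hj : j < m + 1) (r : ℕ) (hjr : j < r)
    (x : List (EE m k) →₀ ZMod q)
    (hx : x ∈ Finsupp.supported (ZMod q) (ZMod q)
      {l | ∀ p ∈ l, ∃ i < m + 2, i ≠ j ∧ p = VV m k i}) :
    detA (ZMod q) d r (sdN (ZMod q) N x) = 0 := by
  have := supp_map ((detA (ZMod q) d r).comp (sdN (ZMod q) N)) _ ⊥ ?_ hx
  · simpa using this
  intro l hl
  rw [Submodule.mem_bot, LinearMap.comp_apply]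
  have := supp_map (detA (ZMod q) d r) _ ⊥ ?_ (sdN_supp (R := ZMod q) N 1 le_rfl l)
  · simpa using this
  rintro l' ⟨-, hC, -⟩
  rw [Submodule.mem_bot]
  apply detA_miss d r j hjr
  obtain ⟨Λ, hΛ⟩ := posV m k j (by omega)
  have h1 := hC {p | 0 < Λ p} (convex_halfSpace_gt Λ.isLinear 0) (by
    intro p hp
    obtain ⟨i, hi, hij, rfl⟩ := hl p hp
    exact hΛ i hi hij)
  have h2 := hC {p | coF m k ⟨j, hj⟩ p ≤ 0} (convex_halfSpace_le (coF m k ⟨j, hj⟩).isLinear 0) (by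
    intro p hp
    obtain ⟨i, hi, hij, rfl⟩ := hl p hp
    rw [Set.mem_ofPred_eq, coF_VV]
    split_ifs with h1 h2
    · exact absurd h2.symm hij
    · exact le_rfl
    · norm_num)
  have h3 := hC (LinearMap.ker (LinearMap.snd ℝ (EuclideanSpace ℝ (Fin (m + 1)))
      (EuclideanSpace ℂ (Fin k))) : Set (EE m k)) (Submodule.convex _) (by
    intro p hp
    obtain ⟨i, hi, hij, rfl⟩ := hl p hp
    simp [VV])
  intro p hp hdp
  have h1 := h1 p hp
  have h2 := h2 p hp
  have h3 : p.2 = 0 := by simpa using h3 p hp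
  have h4 : p.1 ≠ 0 := by
    intro h0
    have : p = 0 := Prod.ext h0 h3
    rw [this] at h1
    simp at h1
  have := (hlab p h3 h4).1 (by omega)
  rw [Set.mem_ofPred_eq, coF_apply] at h2
  simp only [hdp] at this
  linarith

lemma cone_face (r : ℕ) (hr : r < m + 2) (S : Submodule (ZMod q) (ZMod q))
    (f : (List (EE m k) →₀ ZMod q) →ₗ[ZMod q] ZMod q)
    (h : ∀ j < r, ∀ l : List (EE m k), (∀ p ∈ l, ∃ i < m + 2, i ≠ j ∧ p = VV m k i) →
      f (Finsupp.single l 1) ∈ S) :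
    f (cone (VV m k r) (bd (Finsupp.single (sg m k r) 1))) ∈ S := by
  refine supp_map (f.comp (cone (VV m k r))) _ S ?_ (con_supp (fun _ => (1 : ZMod q)) (sg m k r))
  rintro l ⟨h1, h2⟩
  rw [LinearMap.comp_apply, cone_single]
  have hlen : (sg m k r).length = r := by simp [sg_eq]
  obtain ⟨j, hj, hl⟩ := sg_miss m k r l h1 (by omega)
  apply h j hj
  intro p hp
  rcases List.mem_cons.1 hp with rfl | hp
  · exact ⟨r, hr, by omega, rfl⟩
  · obtain ⟨i, hi, hij, rfl⟩ := hl p hp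
    exact ⟨i, by omega, hij, rfl⟩

lemma cone_face_zero (hlab : LabBd m k d) (N r : ℕ) (hr : r < m + 2) :
    detA (ZMod q) d r (sdN (ZMod q) N
      (cone (VV m k r) (bd (Finsupp.single (sg m k r) 1)))) = 0 := by
  have := cone_face q m k r hr ⊥ ((detA (ZMod q) d r).comp (sdN (ZMod q) N)) ?_
  · simpa using this
  · intro j hj l hl
    rw [Submodule.mem_bot]
    exact miss_face q m k d hlab N j (by omega) r hj _ (single_mem hl)

lemma sperner_step (hlab : LabBd m k d) (N r : ℕ) (hr : r < m + 2) :
    detA (ZMod q) d r (sdN (ZMod q) N (bd (Finsupp.single (sg m k (r + 1)) 1)))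
     = detA (ZMod q) d r (sdN (ZMod q) N (Finsupp.single (sg m k r) 1)) := by
  rw [sg, bd_cons, map_sub, map_sub, cone_face_zero q m k d hlab N r hr, sub_zero]

lemma sperner (hlab : LabBd m k d) (hd : ∀ p, d p < m + 2) (N r : ℕ) (hr : r ≤ m + 1) :
    detA (ZMod q) d r (sdN (ZMod q) N (Finsupp.single (sg m k r) 1)) = 1 := by
  induction r with
  | zero => simp [sg, sdN_nil, detA]
  | succ r ih =>
    refine Eq.trans ?_ (ih (by omega))
    rw [← sperner_step q m k d hlab N r (by omega), ← sdN_bd]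
    refine (supp_eq ((detA (ZMod q) d r).comp bd) _ _ ?_
      (sdN_supp (R := ZMod q) N 1 le_rfl (sg m k (r + 1)))).symm
    rintro l' ⟨-, hC, -⟩
    rw [LinearMap.comp_apply]
    apply detA_bd
    have hl : ∀ p ∈ sg m k (r + 1), ∃ i < r + 1, p = VV m k i := by
      intro p hp
      rw [sg_eq] at hp
      obtain ⟨i, hi, rfl⟩ := List.mem_map.1 hp
      exact ⟨i, by simpa using hi, rfl⟩
    have h1 := hC {p | 0 < sumF m k p} (convex_halfSpace_gt (sumF m k).isLinear 0) (by
      intro p hp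
      obtain ⟨i, hi, rfl⟩ := hl p hp
      rw [Set.mem_ofPred_eq, sumF_VV, if_pos (by omega)]; exact one_pos)
    have h2 : ∀ j : Fin (m + 1), r < j → ∀ p ∈ l', coF m k j p ≤ 0 := by
      intro j hj
      refine hC {p | coF m k j p ≤ 0} (convex_halfSpace_le (coF m k j).isLinear 0) ?_
      intro p hp
      obtain ⟨i, hi, rfl⟩ := hl p hp
      rw [Set.mem_ofPred_eq, coF_VV]
      rw [if_pos (by omega), if_neg (by omega)]
    have h3 := hC (LinearMap.ker (LinearMap.snd ℝ (EuclideanSpace ℝ (Fin (m + 1)))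
        (EuclideanSpace ℂ (Fin k))) : Set (EE m k)) (Submodule.convex _) (by
      intro p hp
      obtain ⟨i, hi, rfl⟩ := hl p hp
      simp [VV])
    intro p hp
    have h1 := h1 p hp
    have h3 : p.2 = 0 := by simpa using h3 p hp
    have h4 : p.1 ≠ 0 := by
      intro h0
      have : p = 0 := Prod.ext h0 h3
      rw [this] at h1
      simp at h1
    obtain ⟨ha, hb⟩ := hlab p h3 h4
    by_contra hcon
    push Not at hcon
    by_cases hdm : d p < m + 1
    · have h5 := ha hdm
      have h6 := h2 ⟨d p, hdm⟩ hcon p hp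
      rw [coF_apply] at h6
      linarith
    · have h5 := hb (by have := hd p; omega)
      rw [Set.mem_ofPred_eq, sumF_apply] at h1
      linarith

end geom
end LSLens

namespace LSLens
set_option linter.unusedSectionVars false

section pos
variable (q m k : ℕ) [NeZero q] (ℓ : Fin k → ℤ)

/-- vertex lists good at stage `j` -/
def Gd (j : ℕ) (l : List (EE m k)) : Prop :=
  (∃ Λ : EE m k →ₗ[ℝ] ℝ, ∀ p ∈ l, 0 < Λ p) ∧ (∀ p ∈ l, ∀ i : Fin k, j ≤ i → p.2 i = 0) ∧
    l.length = m + 1 + 2 * j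

/-- new vertex lists -/
def Nw (j : Fin k) (s : ℕ) (l : List (EE m k)) : Prop :=
  (∃ Λ : EE m k →ₗ[ℝ] ℝ, (∀ p ∈ l, 0 < Λ p) ∧ ∀ p, p.2 j = 0 → Λ p = 0) ∧
    (∀ p ∈ l, p.1 = 0 ∧ ∀ i, i ≠ j → p.2 i = 0) ∧ l.length = s

/-- kill a coordinate -/
noncomputable def kil (j : Fin k) : EE m k →ₗ[ℝ] EE m k where
  toFun p := (p.1, WithLp.toLp 2 fun i => if i = j then 0 else p.2 i)
  map_add' a b := by
    refine Prod.ext rfl ?_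
    ext i; simp only [Prod.snd_add, PiLp.add_apply]; split_ifs <;> simp
  map_smul' r b := by
    refine Prod.ext rfl ?_
    ext i; simp

lemma kil_old (j : Fin k) (p : EE m k) (h : p.2 j = 0) : kil m k j p = p := by
  refine Prod.ext rfl ?_
  ext i
  change (if i = j then 0 else p.2 i) = p.2 i
  split_ifs with h'
  · rw [h', h]
  · rfl

lemma kil_new (j : Fin k) (p : EE m k) (h1 : p.1 = 0) (h : ∀ i, i ≠ j → p.2 i = 0) :
    kil m k j p = 0 := by
  refine Prod.ext h1 ?_
  ext i
  change (if i = j then 0 else p.2 i) = 0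
  split_ifs with h'
  · rfl
  · exact h i h'

lemma join_gd (j : Fin k) (s : ℕ) (l1 l2 : List (EE m k)) (h1 : Nw m k j s l1) (h2 : Gd m k j l2) :
    (∃ Λ : EE m k →ₗ[ℝ] ℝ, ∀ p ∈ l1 ++ l2, 0 < Λ p) ∧
    (∀ p ∈ l1 ++ l2, ∀ i : Fin k, (j : ℕ) + 1 ≤ i → p.2 i = 0) ∧
    (l1 ++ l2).length = s + (m + 1 + 2 * j) := by
  obtain ⟨⟨Λ1, hΛ1, hΛ1'⟩, hp1, hs⟩ := h1
  obtain ⟨⟨Λ2, hΛ2⟩, hp2, hs2⟩ := h2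
  refine ⟨⟨Λ2.comp (kil m k j) + Λ1, ?_⟩, ?_, by simp [hs, hs2]⟩
  · intro p hp
    rw [LinearMap.add_apply, LinearMap.comp_apply]
    rcases List.mem_append.1 hp with hp | hp
    · rw [kil_new m k j p (hp1 p hp).1 (hp1 p hp).2, map_zero, zero_add]
      exact hΛ1 p hp
    · have := hp2 p hp j le_rfl
      rw [kil_old m k j p this, hΛ1' p this, add_zero]
      exact hΛ2 p hp
  · intro p hp i hi
    rcases List.mem_append.1 hp with hp | hp
    · exact (hp1 p hp).2 i (by rintro rfl; omega)
    · exact hp2 p hp i (by omega)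

/-- the functional on one complex coordinate -/
noncomputable def reF (j : Fin k) (s : ℂ) : EE m k →ₗ[ℝ] ℝ where
  toFun p := ((starRingEnd ℂ) s * p.2 j).re
  map_add' a b := by simp [mul_add]
  map_smul' r b := by simp; ring

lemma reF_apply (j : Fin k) (s : ℂ) (p : EE m k) :
    reF m k j s p = ((starRingEnd ℂ) s * p.2 j).re := rfl

lemma re_pos (z z' : ℂ) (h : ‖z‖ = 1) (h' : ‖z'‖ = 1) (hs : z + z' ≠ 0) :
    0 < ((starRingEnd ℂ) (z + z') * z).re := by
  have h1 : z.re * z.re + z.im * z.im = 1 := by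
    rw [← Complex.normSq_apply, Complex.normSq_eq_norm_sq, h]; norm_num
  have h2 : z'.re * z'.re + z'.im * z'.im = 1 := by
    rw [← Complex.normSq_apply, Complex.normSq_eq_norm_sq, h']; norm_num
  have h3 := Complex.normSq_pos.2 hs
  rw [Complex.normSq_apply] at h3
  simp only [Complex.mul_re, Complex.conj_re, Complex.conj_im, Complex.add_re, Complex.add_im]
    at h3 ⊢
  nlinarith

/-- the vertex on the j-th circle -/
noncomputable def cv (j : ℕ) (u : Fin k → ℂ) : EE m k :=
  (0, WithLp.toLp 2 fun i => if (i : ℕ) = j then u i else 0)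

lemma gg_cv (c : ZMod q) (j : ℕ) (u : Fin k → ℂ) : gg q m k ℓ c (cv m k j u)
    = cv m k j (fun i => ZMod.stdAddChar (c * (ℓ i : ZMod q)) * u i) := by
  refine Prod.ext rfl ?_
  ext i
  change ZMod.stdAddChar (c * (ℓ i : ZMod q)) * (if (i : ℕ) = j then u i else 0) = if (i : ℕ) = j then _ else 0
  split_ifs <;> simp

lemma cv_snd (j : Fin k) (u : Fin k → ℂ) : (cv m k j u).2 j = u j := by
  simp [cv]

lemma cv_ne (j i : Fin k) (u : Fin k → ℂ) (h : i ≠ j) : (cv m k j u).2 i = 0 := by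
  simp [cv, Fin.val_inj, h]

lemma nw_two (j : Fin k) (u u' : Fin k → ℂ) (h : ‖u j‖ = 1) (h' : ‖u' j‖ = 1)
    (hs : u j + u' j ≠ 0) : Nw m k j 2 [cv m k j u, cv m k j u'] := by
  refine ⟨⟨reF m k j (u j + u' j), ?_, ?_⟩, ?_, rfl⟩
  · intro p hp
    simp only [List.mem_cons, List.not_mem_nil, or_false] at hp
    rcases hp with rfl | rfl
    · rw [reF_apply, cv_snd]; exact re_pos _ _ h h' hs
    · rw [reF_apply, cv_snd, add_comm]; exact re_pos _ _ h' h (by rwa [add_comm])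
  · intro p hp
    rw [reF_apply, hp]; simp
  · intro p hp
    simp only [List.mem_cons, List.not_mem_nil, or_false] at hp
    rcases hp with rfl | rfl
    · exact ⟨rfl, fun i hi => cv_ne m k j i _ hi⟩
    · exact ⟨rfl, fun i hi => cv_ne m k j i _ hi⟩

lemma nw_one (j : Fin k) (u : Fin k → ℂ) (h : ‖u j‖ = 1) : Nw m k j 1 [cv m k j u] := by
  obtain ⟨⟨Λ, h1, h2⟩, h3, -⟩ := nw_two m k j u u h h (by
    intro h0; rw [← two_mul] at h0; simp at h0; rw [h0] at h; simp at h)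
  exact ⟨⟨Λ, fun p hp => h1 p (by simp_all), h2⟩, fun p hp => h3 p (by simp_all), rfl⟩

lemma norm_chr (x : ZMod q) : ‖(ZMod.stdAddChar x : ℂ)‖ = 1 := by
  simp

variable (om : Fin k → ℂ)

lemma arc_supp (hom : ∀ i, om i * om i = ZMod.stdAddChar (ℓ i : ZMod q)) (hom1 : ∀ i, om i ≠ -1)
    (j : Fin k) (c : ZMod q) :
    act (gg q m k ℓ c) (arc (fun c => gg q m k ℓ c) (fun j => cv m k j 1) (fun j => cv m k j om) j)
      ∈ Finsupp.supported (ZMod q) (ZMod q) {l | Nw m k j 2 l} := by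
  have hn : ‖om j‖ = 1 := by
    have := congrArg norm (hom j)
    rw [norm_mul, norm_chr] at this
    nlinarith [norm_nonneg (om j)]
  have h1 : (1 : ℂ) + om j ≠ 0 := by
    intro h; exact hom1 j (by linear_combination h)
  have hz : (ZMod.stdAddChar (c * (ℓ j : ZMod q)) : ℂ) ≠ 0 := by
    rw [← norm_ne_zero_iff, norm_chr]; exact one_ne_zero
  have ho : om j ≠ 0 := by rw [← norm_ne_zero_iff, hn]; exact one_ne_zero
  rw [arc, map_add, act_single, act_single]
  simp only [List.map_cons, List.map_nil, gg_cv]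
  refine add_mem (single_mem ?_) (single_mem ?_)
  · refine nw_two m k j _ _ ?_ ?_ ?_
    · simp
    · simp [hn]
    · rw [← mul_add]; exact mul_ne_zero hz h1
  · refine nw_two m k j _ _ ?_ ?_ ?_
    · simp [hn]
    · simp
    · rw [← mul_add, one_mul, ← hom]
      refine mul_ne_zero hz ?_
      simp only [Pi.one_apply, mul_one]
      rw [show om j + om j * om j = om j * (1 + om j) by ring]
      exact mul_ne_zero ho h1

/-- The boundary of the simplex. -/
noncomputable def ZZ : List (EE m k) →₀ ZMod q := bd (Finsupp.single (sg m k (m + 2)) 1)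

lemma ZZ_supp : ZZ q m k ∈ Finsupp.supported (ZMod q) (ZMod q) {l | Gd m k 0 l} := by
  refine Finsupp.supported_mono ?_ (con_supp (fun _ => (1 : ZMod q)) (sg m k (m + 2)))
  rintro l ⟨h1, h2⟩
  have hlen : (sg m k (m + 2)).length = m + 2 := by simp [sg_eq]
  obtain ⟨j, hj, h⟩ := sg_miss m k _ l h1 (by omega)
  obtain ⟨Λ, hΛ⟩ := posV m k j hj
  refine ⟨⟨Λ, ?_⟩, ?_, by omega⟩
  · intro p hp
    obtain ⟨i, hi, hij, rfl⟩ := h p hp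
    exact hΛ i hi hij
  · intro p hp i _
    obtain ⟨i, hi, hij, rfl⟩ := h p hp
    rw [VV_snd]; rfl

lemma ZZ_act (c : ZMod q) : act (gg q m k ℓ c) (ZZ q m k) = ZZ q m k := by
  rw [ZZ, ← bd_act, act_single]
  congr 2
  rw [sg_eq, List.map_map]
  apply List.map_congr_left
  intro i _
  refine Prod.ext rfl ?_
  exact map_zero (rot q k ℓ c)

lemma CC_supp (hom : ∀ i, om i * om i = ZMod.stdAddChar (ℓ i : ZMod q)) (hom1 : ∀ i, om i ≠ -1)
    (j : ℕ) (hj : j ≤ k) :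
    CC (fun c => gg q m k ℓ c) (fun j => cv m k j 1) (fun j => cv m k j om) (ZZ q m k) j
      ∈ Finsupp.supported (ZMod q) (ZMod q) {l | Gd m k j l} := by
  induction j with
  | zero => exact ZZ_supp q m k
  | succ j ih =>
    rw [CC]
    have hx : ∑ c, act (gg q m k ℓ c) (arc (fun c => gg q m k ℓ c) (fun j => cv m k j 1)
        (fun j => cv m k j om) j)
        ∈ Finsupp.supported (ZMod q) (ZMod q) {l | Nw m k ⟨j, hj⟩ 2 l} :=
      sum_mem fun c _ => arc_supp q m k ℓ om hom hom1 ⟨j, hj⟩ c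
    refine Finsupp.supported_mono ?_ (jn_supp _ _ _ _ (ih (by omega)) hx)
    rintro l ⟨l1, h1, l2, h2, rfl⟩
    obtain ⟨ha, hb, hc⟩ := join_gd m k ⟨j, hj⟩ 2 l1 l2 h1 h2
    exact ⟨ha, hb, by rw [hc]; simp only; ring⟩

/-- The chain sequence. -/
noncomputable def HH (r : ℕ) : List (EE m k) →₀ ZMod q :=
  if r % 2 = 0 then
    He (fun c => gg q m k ℓ c) (fun j => cv m k j 1) (fun j => cv m k j om) (ZZ q m k) (r / 2)
  else Ho (fun c => gg q m k ℓ c) (fun j => cv m k j 1) (fun j => cv m k j om) (ZZ q m k) (r / 2)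

lemma HH_even (j : ℕ) : HH q m k ℓ om (2 * j) = He (fun c => gg q m k ℓ c) (fun j => cv m k j 1)
    (fun j => cv m k j om) (ZZ q m k) j := by
  simp [HH]

lemma HH_odd (j : ℕ) : HH q m k ℓ om (2 * j + 1) = Ho (fun c => gg q m k ℓ c)
    (fun j => cv m k j 1) (fun j => cv m k j om) (ZZ q m k) j := by
  rw [HH, if_neg (by omega)]
  congr 1
  omega

lemma HH_supp (hom : ∀ i, om i * om i = ZMod.stdAddChar (ℓ i : ZMod q)) (hom1 : ∀ i, om i ≠ -1)
    (r : ℕ) (hr : r < 2 * k) :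
    HH q m k ℓ om r ∈ Finsupp.supported (ZMod q) (ZMod q)
      {l | (∃ Λ : EE m k →ₗ[ℝ] ℝ, ∀ p ∈ l, 0 < Λ p) ∧ l.length = m + 2 + r} := by
  rcases Nat.even_or_odd' r with ⟨j, rfl | rfl⟩
  · rw [HH_even, He]
    refine Finsupp.supported_mono ?_ (jn_supp _ _ _ _ (CC_supp q m k ℓ om hom hom1 j (by omega))
      (single_mem (S := {l | Nw m k ⟨j, by omega⟩ 1 l}) (nw_one m k ⟨j, by omega⟩ 1 (by simp))))
    rintro l ⟨l1, h1, l2, h2, rfl⟩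
    obtain ⟨ha, hb, hc⟩ := join_gd m k ⟨j, by omega⟩ 1 l1 l2 h1 h2
    exact ⟨ha, by rw [hc]; simp only; ring⟩
  · rw [HH_odd, Ho]
    have hx := arc_supp q m k ℓ om hom hom1 ⟨j, by omega⟩ 0
    have e : act (gg q m k ℓ 0) (arc (fun c => gg q m k ℓ c) (fun j => cv m k j 1)
        (fun j => cv m k j om) j) = arc (fun c => gg q m k ℓ c) (fun j => cv m k j 1)
        (fun j => cv m k j om) j := by
      have : (gg q m k ℓ 0 : EE m k → EE m k) = id := by
        funext p; exact Prod.ext rfl (rot_zero q k ℓ p.2)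
      rw [this]
      simp [act]
    rw [e] at hx
    refine Finsupp.supported_mono ?_ (jn_supp _ _ _ _ (CC_supp q m k ℓ om hom hom1 j (by omega)) hx)
    rintro l ⟨l1, h1, l2, h2, rfl⟩
    obtain ⟨ha, hb, hc⟩ := join_gd m k ⟨j, by omega⟩ 2 l1 l2 h1 h2
    exact ⟨ha, by rw [hc]; simp only; ring⟩

lemma exists_om (hq2 : 2 ≤ q) (hℓ : ∀ j, IsCoprime (ℓ j) (q : ℤ)) :
    ∃ om : Fin k → ℂ, (∀ i, om i * om i = ZMod.stdAddChar (ℓ i : ZMod q)) ∧ ∀ i, om i ≠ -1 := by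
  choose om hom using fun i : Fin k =>
    IsAlgClosed.exists_pow_nat_eq (ZMod.stdAddChar (ℓ i : ZMod q) : ℂ) (n := 2) (by norm_num)
  refine ⟨om, fun i => by rw [← sq, hom], fun i h => ?_⟩
  have h1 := hom i
  rw [h] at h1
  have h2 : (ZMod.stdAddChar (ℓ i : ZMod q) : ℂ) = ZMod.stdAddChar (0 : ZMod q) := by
    rw [← h1]; simp
  have h3 := ZMod.injective_stdAddChar h2
  rw [ZMod.intCast_zmod_eq_zero_iff_dvd] at h3
  have h4 : IsUnit (q : ℤ) := (hℓ i).symm.isUnit_of_dvd' dvd_rfl h3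
  rw [Int.isUnit_iff] at h4
  omega

theorem comb_contra (hq2 : 2 ≤ q) (hk : 1 ≤ k) (hℓ : ∀ j, IsCoprime (ℓ j) (q : ℤ))
    (d : EE m k → ℕ) (t : ℕ → EE m k → ZMod q)
    (hd : ∀ p, d p < m + 2) (hdg : ∀ c p, d (gg q m k ℓ c p) = d p)
    (htg : ∀ i c p, ¬ p.2 = 0 → t i (gg q m k ℓ c p) = t i p + c)
    (hlab : LabBd m k d)
    (hloc : ∀ p : EE m k, p ≠ 0 → ∃ W : Set (EE m k), IsOpen W ∧ p ∈ W ∧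
      ((∃ i < m + 2, ∀ x ∈ W, d x ≠ i) ∨
        ∃ i < 2 * k - 1, ∃ c, ∀ x ∈ W, t i x = c ∧ x.2 ≠ 0)) : False := by
  obtain ⟨om, hom, hom1⟩ := exists_om q k ℓ hq2 hℓ
  obtain ⟨K, rfl⟩ : ∃ K, k = K + 1 := ⟨k - 1, by omega⟩
  set H := HH q m (K + 1) ℓ om with hH
  -- the compact set
  let KK : Set (EE m (K + 1)) := ⋃ r ∈ Finset.range (2 * K + 2), ⋃ l ∈ (H r).support,
    convexHull ℝ {p | p ∈ l}
  have hKc : IsCompact KK := by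
    refine Finset.isCompact_biUnion _ fun r _ => Finset.isCompact_biUnion _ fun l _ => ?_
    exact (List.finite_toSet l).isCompact_convexHull (𝕜 := ℝ)
  have hsub : ∀ r < 2 * K + 2, ∀ l ∈ (H r).support, convexHull ℝ {p | p ∈ l} ⊆ KK := by
    intro r hr l hl x hx
    simp only [KK, Set.mem_iUnion]
    exact ⟨r, by simpa using hr, l, hl, hx⟩
  have hK0 : ∀ p ∈ KK, p ≠ 0 := by
    intro p hp
    simp only [KK, Set.mem_iUnion] at hp
    obtain ⟨r, hr, l, hl, hp⟩ := hp
    obtain ⟨⟨Λ, hΛ⟩, -⟩ := HH_supp q m (K + 1) ℓ om hom hom1 r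
      (by have := Finset.mem_range.1 hr; omega) hl
    have : p ∈ {p | 0 < Λ p} := convexHull_min (fun p hp => hΛ p hp)
      (convex_halfSpace_gt Λ.isLinear 0) hp
    rintro rfl
    simp at this
  choose W hWo hWm hWs using hloc
  obtain ⟨δ, hδ, hleb⟩ := lebesgue_number_lemma_of_metric (s := KK)
    (c := fun p : {p : EE m (K + 1) // p ≠ 0} => W p.1 p.2) hKc (fun p => hWo _ _)
    (fun p hp => Set.mem_iUnion.2 ⟨⟨p, hK0 p hp⟩, hWm _ _⟩)
  set L := m + 2 + 2 * K + 2 with hLdef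
  set D := Metric.diam KK
  obtain ⟨N, hN⟩ : ∃ N : ℕ, (1 - (L : ℝ)⁻¹) ^ N * D < δ := by
    have h1 : (1 - (L : ℝ)⁻¹) < 1 := by
      have : (0 : ℝ) < L := by rw [hLdef]; positivity
      have := inv_pos.2 this
      linarith
    have h0 : 0 ≤ (1 - (L : ℝ)⁻¹) := by
      have : (1 : ℝ) ≤ L := by rw [hLdef]; exact_mod_cast by omega
      have := inv_le_one_of_one_le₀ this
      linarith
    have := (tendsto_pow_atTop_nhds_zero_of_lt_one h0 h1).mul_const D
    rw [zero_mul] at this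
    exact (this.eventually_lt_const hδ).exists
  have hzero := eval_zero d (m + 1) t (fun c => gg q m (K + 1) ℓ c) (fun p => p.2 = 0) hd hdg htg K
    (fun r => sdN (ZMod q) N (H r)) ?_ ?_ ?_
  · rw [alp, LinearMap.comp_apply, sdN_bd] at hzero
    have e0 : H 0 = He (fun c => gg q m (K + 1) ℓ c) (fun j => cv m (K + 1) j 1)
      (fun j => cv m (K + 1) j om) (ZZ q m (K + 1)) 0 := HH_even q m (K + 1) ℓ om 0
    rw [e0, He_bd _ _ _ _ ?_ ?_, CC, ZZ, sperner_step q m (K + 1) d hlab N (m + 1) (by omega),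
      sperner q m (K + 1) d hlab hd N (m + 1) le_rfl] at hzero
    · haveI : Fact (1 < q) := ⟨hq2⟩
      exact one_ne_zero hzero
    · intro c c' p
      exact Prod.ext rfl (rot_rot q (K + 1) ℓ c c' p.2)
    · exact bd_bd _
  · intro r hr
    have h1 : H r ∈ Finsupp.supported (ZMod q) (ZMod q) (((H r).support : Set (List (EE m (K + 1))))) :=
      Finsupp.mem_supported_support _ _
    refine supp_map (sdN (ZMod q) N) _ _ ?_ h1
    intro l hl
    obtain ⟨-, hlen⟩ := HH_supp q m (K + 1) ℓ om hom hom1 r (by omega) hl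
    refine Finsupp.supported_mono ?_ (sdN_supp (R := ZMod q) N L (by omega) l)
    rintro l' ⟨hlen', hC, hdist⟩
    have hKl : ∀ p ∈ l', p ∈ KK := fun p hp => hsub r (by omega) l hl
      (hC _ (convex_convexHull ℝ _) (fun p hp => subset_convexHull ℝ _ hp) p hp)
    have hDl := hdist (by omega) D (fun p hp p' hp' => Metric.dist_le_diam_of_mem hKc.isBounded
      (hsub r (by omega) l hl (subset_convexHull ℝ _ hp))
      (hsub r (by omega) l hl (subset_convexHull ℝ _ hp')))
    refine ⟨?_, by omega⟩
    obtain ⟨x, hx⟩ := List.exists_mem_of_length_pos (show 0 < l'.length by omega)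
    obtain ⟨⟨p, hp⟩, hball⟩ := hleb x (hKl x hx)
    have hin : ∀ y ∈ l', y ∈ W p hp := fun y hy => hball (by
      rw [Metric.mem_ball]; exact (hDl y hy x hx).trans_lt hN)
    rcases hWs p hp with ⟨i, hi, h⟩ | ⟨i, hi, c, h⟩
    · exact Or.inl ⟨i, hi, fun y hy => h y (hin y hy)⟩
    · exact Or.inr ⟨⟨i, by omega, c, fun y hy => (h y (hin y hy)).1⟩,
        fun y hy => (h y (hin y hy)).2⟩
  · intro j hj
    simp only [sdN_bd, hH, HH_odd, HH_even]
    rw [Ho_bd _ _ _ _ ?_ ?_ ?_, map_sub, sdN_act]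
    · intro c c' p
      exact Prod.ext rfl (rot_rot q (K + 1) ℓ c c' p.2)
    · exact bd_bd _
    · exact ZZ_act q m (K + 1) ℓ
  · intro j hj
    have e : 2 * j + 2 = 2 * (j + 1) := by ring
    simp only [sdN_bd, hH, HH_odd, e, HH_even]
    rw [He_bd _ _ _ _ ?_ ?_, CC_succ _ _ _ _ ?_ ?_, map_sum]
    · simp_rw [sdN_act]
    · intro c c' p
      exact Prod.ext rfl (rot_rot q (K + 1) ℓ c c' p.2)
    · exact ZZ_act q m (K + 1) ℓ
    · intro c c' p
      exact Prod.ext rfl (rot_rot q (K + 1) ℓ c c' p.2)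
    · exact bd_bd _

end pos
end LSLens

namespace LSLens

section action
variable (q m k : ℕ) [NeZero q] (ℓ : Fin k → ℤ)

/-- the sphere in real space -/
abbrev SA (m : ℕ) := Metric.sphere (0 : EuclideanSpace ℝ (Fin (m + 1))) 1

/-- the sphere in complex space -/
abbrev SB (k : ℕ) := Metric.sphere (0 : EuclideanSpace ℂ (Fin k)) 1

/-- the quotient map -/
def lpi (y : SB k) : LensSpace q k ℓ := Quot.mk _ y

lemma norm_rot (c : ZMod q) (b : EuclideanSpace ℂ (Fin k)) : ‖rot q k ℓ c b‖ = ‖b‖ := by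
  simp [EuclideanSpace.norm_eq, rot_apply, norm_chr]

lemma cont_rot (c : ZMod q) : Continuous (rot q k ℓ c) :=
  LinearMap.continuous_of_finiteDimensional _

/-- rotation on the sphere -/
noncomputable def rotS (c : ZMod q) (y : SB k) : SB k :=
  ⟨rot q k ℓ c y.1, by have := y.2; simp only [mem_sphere_zero_iff_norm] at this ⊢; rw [norm_rot, this]⟩

lemma cont_rotS (c : ZMod q) : Continuous (rotS q k ℓ c) :=
  ((cont_rot q k ℓ c).comp continuous_subtype_val).subtype_mk _

lemma rotS_rotS (c c' : ZMod q) (y : SB k) :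
    rotS q k ℓ c (rotS q k ℓ c' y) = rotS q k ℓ (c + c') y :=
  Subtype.ext (rot_rot q k ℓ c c' y.1)

lemma rotS_zero (y : SB k) : rotS q k ℓ 0 y = y := Subtype.ext (rot_zero q k ℓ y.1)

lemma lensRel_iff (y y' : SB k) : lensRel q k ℓ y y' ↔ ∃ c : ZMod q, rotS q k ℓ c y = y' := by
  have key : ∀ (z : ℤ) (j : Fin k), (ZMod.stdAddChar ((z : ZMod q) * (ℓ j : ZMod q)) : ℂ)
      = Complex.exp (2 * Real.pi * Complex.I * z * ℓ j / q) := by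
    intro z j
    rw [← Int.cast_mul, ZMod.stdAddChar_coe]; push_cast; congr 1; ring
  constructor
  · rintro ⟨z, hz⟩
    refine ⟨(z : ZMod q), Subtype.ext ?_⟩
    ext j
    change rot q k ℓ z y.1 j = y'.1 j
    rw [rot_apply, key, hz]
  · rintro ⟨c, rfl⟩
    obtain ⟨z, rfl⟩ := ZMod.intCast_surjective c
    refine ⟨z, fun j => ?_⟩
    change rot q k ℓ z y.1 j = _
    rw [rot_apply, key]

lemma lpi_eq_iff (y y' : SB k) : lpi q k ℓ y = lpi q k ℓ y' ↔ ∃ c : ZMod q, rotS q k ℓ c y' = y := by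
  have heq : Equivalence (lensRel q k ℓ) := by
    refine ⟨fun y => ?_, fun {y y'} h => ?_, fun {x y z} h h' => ?_⟩
    · rw [lensRel_iff]; exact ⟨0, rotS_zero q k ℓ y⟩
    · rw [lensRel_iff] at *
      obtain ⟨c, rfl⟩ := h
      exact ⟨-c, by rw [rotS_rotS, neg_add_cancel, rotS_zero]⟩
    · rw [lensRel_iff] at *
      obtain ⟨c, rfl⟩ := h
      obtain ⟨c', rfl⟩ := h'
      exact ⟨c' + c, by rw [rotS_rotS]⟩
  constructor
  · intro h
    have := heq.eqvGen_iff.1 (Quot.eqvGen_exact h)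
    have := heq.symm this
    rwa [lensRel_iff] at this
  · intro h
    exact (Quot.sound ((lensRel_iff q k ℓ y' y).2 h)).symm

lemma lpi_rotS (c : ZMod q) (y : SB k) : lpi q k ℓ (rotS q k ℓ c y) = lpi q k ℓ y :=
  (lpi_eq_iff q k ℓ _ _).2 ⟨c, rfl⟩

lemma rotS_free (hℓ : ∀ j, IsCoprime (ℓ j) (q : ℤ)) (c c' : ZMod q) (y : SB k)
    (h : rotS q k ℓ c y = rotS q k ℓ c' y) : c = c' := by
  have hy : y.1 ≠ 0 := by
    intro h0; have := y.2; simp [h0] at this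
  have : ∃ j, y.1 j ≠ 0 := by
    by_contra! hn; exact hy (by ext j; simpa using hn j)
  obtain ⟨j, hj⟩ := this
  have h1 : rot q k ℓ c y.1 j = rot q k ℓ c' y.1 j := congrArg (fun z : SB k => z.1 j) h
  rw [rot_apply, rot_apply] at h1
  have h2 := ZMod.injective_stdAddChar (mul_right_cancel₀ hj h1)
  have hu : IsUnit (ℓ j : ZMod q) := by
    obtain ⟨a, b, hab⟩ := hℓ j
    refine IsUnit.of_mul_eq_one (a : ZMod q) ?_
    have := congrArg (Int.cast : ℤ → ZMod q) hab
    push_cast at this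
    simpa [mul_comm] using this
  exact hu.mul_right_cancel h2

/-- the action as an instance -/
@[reducible] noncomputable def sphAct : AddAction (ZMod q) (SB k) where
  vadd c y := rotS q k ℓ c y
  zero_vadd y := rotS_zero q k ℓ y
  add_vadd c c' y := (rotS_rotS q k ℓ c c' y).symm

lemma lpi_cov (hℓ : ∀ j, IsCoprime (ℓ j) (q : ℤ)) :
    letI := sphAct q k ℓ; IsAddQuotientCoveringMap (lpi q k ℓ) (ZMod q) := by
  letI := sphAct q k ℓ
  have hq : Topology.IsQuotientMap (lpi q k ℓ) := isQuotientMap_quot_mk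
  haveI : ContinuousConstVAdd (ZMod q) (SB k) := ⟨fun c => cont_rotS q k ℓ c⟩
  haveI : IsCancelVAdd (ZMod q) (SB k) := 
    { left_cancel' := fun a b c h => by
        have : rotS q k ℓ (-a) (rotS q k ℓ a b) = rotS q k ℓ (-a) (rotS q k ℓ a c) := congrArg _ h
        simpa [rotS_rotS, rotS_zero] using this
      right_cancel' := fun c c' y h => rotS_free q k ℓ hℓ c c' y h }
  exact hq.isAddQuotientCoveringMap_of_properlyDiscontinuousVAdd (fun {a b} => lpi_eq_iff q k ℓ a b)

lemma lpi_isCov (hℓ : ∀ j, IsCoprime (ℓ j) (q : ℤ)) : IsCoveringMap (lpi q k ℓ) := by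
  letI := sphAct q k ℓ
  exact (lpi_cov q k ℓ hℓ).isCoveringMap

lemma lpi_openq : IsOpenQuotientMap (lpi q k ℓ) := by
  refine ⟨Quot.mk_surjective, continuous_quot_mk, ?_⟩
  intro U hU
  have hq : Topology.IsQuotientMap (lpi q k ℓ) := isQuotientMap_quot_mk
  rw [← hq.isOpen_preimage]
  have : lpi q k ℓ ⁻¹' (lpi q k ℓ '' U) = ⋃ c : ZMod q, rotS q k ℓ c ⁻¹' U := by
    ext y
    simp only [Set.mem_preimage, Set.mem_image, Set.mem_iUnion]
    constructor
    · rintro ⟨y', h', he⟩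
      obtain ⟨c, hc⟩ := (lpi_eq_iff q k ℓ y' y).1 he
      exact ⟨c, hc ▸ h'⟩
    · rintro ⟨c, hc⟩
      exact ⟨_, hc, lpi_rotS q k ℓ c y⟩
  rw [this]
  exact isOpen_iUnion fun c => hU.preimage (cont_rotS q k ℓ c)

/-- the equivariant locally constant function attached to a null-homotopic open set -/
lemma liftT (hℓ : ∀ j, IsCoprime (ℓ j) (q : ℤ)) (U : Set (SA m × LensSpace q k ℓ)) (hU : IsOpen U)
    (hn : ContinuousMap.Nullhomotopic (⟨Subtype.val, continuous_subtype_val⟩ : C(U, SA m × LensSpace q k ℓ))) :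
    ∃ T : SA m × SB k → ZMod q, (∀ x y c, T (x, rotS q k ℓ c y) = T (x, y) + c) ∧
      ∀ c, IsOpen {p : SA m × SB k | (p.1, lpi q k ℓ p.2) ∈ U ∧ T p = c} := by
  classical
  have cov := lpi_isCov q k ℓ hℓ
  obtain ⟨pt, ⟨F⟩⟩ := hn
  set V : Set (SA m × SB k) := {p | (p.1, lpi q k ℓ p.2) ∈ U} with hV
  have hVo : IsOpen V := hU.preimage (by have := cov.continuous; fun_prop)
  let j : C(V, U) := ⟨fun a => ⟨(a.1.1, lpi q k ℓ a.1.2), a.2⟩, by have := cov.continuous; fun_prop⟩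
  let H : C(unitInterval × V, LensSpace q k ℓ) := ⟨fun z => (F (z.1, j z.2)).2, by fun_prop⟩
  let f : C(V, SB k) := ⟨fun a => a.1.2, by fun_prop⟩
  have H0 : ∀ a, H (0, a) = lpi q k ℓ (f a) := by
    intro a; simp [H, f, j]
  have H1 : ∀ a, H (1, a) = pt.2 := by intro a; simp [H]
  let G := cov.liftHomotopy H f H0
  have hG1 : ∀ a, lpi q k ℓ (G (1, a)) = pt.2 := by
    intro a
    rw [← H1 a]; exact congrFun (cov.liftHomotopy_lifts H f H0) (1, a)
  obtain ⟨y0, hy0⟩ := (lpi_openq q k ℓ).surjective pt.2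
  have hex : ∀ p : SA m × SB k, ∃ c : ZMod q, (∀ h : p ∈ V, rotS q k ℓ c y0 = G (1, ⟨p, h⟩)) ∧
      (p ∉ V → rotS q k ℓ c (Quot.out (lpi q k ℓ p.2) : SB k) = p.2) := by
    intro p
    by_cases hp : p ∈ V
    · obtain ⟨c, hc⟩ := (lpi_eq_iff q k ℓ (G (1, ⟨p, hp⟩)) y0).1 (by rw [hG1, hy0])
      exact ⟨c, fun _ => hc, fun h => absurd hp h⟩
    · obtain ⟨c, hc⟩ := (lpi_eq_iff q k ℓ p.2 (Quot.out (lpi q k ℓ p.2))).1 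
        (Quot.out_eq (lpi q k ℓ p.2)).symm
      exact ⟨c, fun h => absurd h hp, fun _ => hc⟩
  choose T hT1 hT2 using hex
  refine ⟨T, ?_, ?_⟩
  · intro x y c
    have hVc : (x, rotS q k ℓ c y) ∈ V ↔ (x, y) ∈ V := by simp [hV, lpi_rotS]
    by_cases hp : (x, y) ∈ V
    · have hp' := hVc.2 hp
      apply rotS_free q k ℓ hℓ _ _ y0
      rw [hT1 _ hp', add_comm (T (x, y)) c, ← rotS_rotS, hT1 _ hp]
      have e1 : ∀ t, rotS q k ℓ c (G (t, ⟨(x, y), hp⟩)) = G (t, ⟨(x, rotS q k ℓ c y), hp'⟩) := by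
        have := (cov.eq_liftPath_iff (γ := H.comp <| (ContinuousMap.id unitInterval).prodMk <|
          .const unitInterval ⟨(x, rotS q k ℓ c y), hp'⟩)
          (e := f ⟨(x, rotS q k ℓ c y), hp'⟩) (H0 _) (Γ := fun t => rotS q k ℓ c (G (t, ⟨(x, y), hp⟩)))).2
          ⟨?_, ?_, ?_⟩
        · exact fun t => congrFun this t
        · exact (cont_rotS q k ℓ c).comp (by fun_prop)
        · funext t
          simp only [Function.comp, lpi_rotS]
          have := congrFun (cov.liftHomotopy_lifts H f H0) (t, ⟨(x, y), hp⟩)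
          refine this.trans ?_
          simp [H, j, lpi_rotS]
        · have := cov.liftHomotopy_zero H f H0 ⟨(x, y), hp⟩
          exact congrArg _ this
      exact (e1 1).symm
    · have hp' := fun h => hp (hVc.1 h)
      apply rotS_free q k ℓ hℓ _ _ (Quot.out (lpi q k ℓ y) : SB k)
      have a1 := hT2 _ hp'
      have a2 := hT2 _ hp
      simp only [lpi_rotS] at a1 a2
      rw [a1, add_comm (T (x, y)) c, ← rotS_rotS, a2]
  · intro c
    have h1 : IsOpen {a : V | T a.1 = c} := by
      rw [← isClosed_compl_iff]
      have : {a : V | T a.1 = c}ᶜ = ⋃ c' ∈ {c' : ZMod q | c' ≠ c}, {a : V | G (1, a) = rotS q k ℓ c' y0} := by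
        ext a
        simp only [Set.mem_compl_iff, Set.mem_ofPred_eq, Set.mem_iUnion, exists_prop]
        constructor
        · intro h; exact ⟨_, h, (hT1 a.1 a.2).symm⟩
        · rintro ⟨c', h, h'⟩ he
          apply h
          rw [← he]
          apply rotS_free q k ℓ hℓ _ _ y0
          rw [hT1 a.1 a.2]; exact h'.symm
      rw [this]
      apply Set.Finite.isClosed_biUnion (Set.toFinite _)
      intro c' _
      exact isClosed_eq (by fun_prop) continuous_const
    have := hVo.isOpenMap_subtype_val _ h1
    convert this using 1
    ext p
    simp only [Set.mem_ofPred_eq, Set.mem_image, Subtype.exists, exists_and_right, exists_eq_right]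
    constructor
    · rintro ⟨a, b⟩; exact ⟨a, b⟩
    · rintro ⟨a, b⟩; exact ⟨a, b⟩
end action
end LSLens

namespace LSLens

section lower
variable (q m k : ℕ) [NeZero q] (ℓ : Fin k → ℤ)

lemma exists_v (A B : Set (SA m × LensSpace q k ℓ)) (hA : IsOpen A) (hB : IsOpen B)
    (hAB : ∀ z, z ∈ A ∨ z ∈ B) :
    ∃ v : SA m × SB k → ℝ, Continuous v ∧ (∀ p, 0 ≤ v p) ∧ (∀ p, v p ≤ 1) ∧
      (∀ c x y, v (x, rotS q k ℓ c y) = v (x, y)) ∧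
      (∀ p, (p.1, lpi q k ℓ p.2) ∉ A → v p = 1) ∧
      (∀ p, (p.1, lpi q k ℓ p.2) ∉ B → ∀ᶠ p' in 𝓝 p, v p' = 0) := by
  have hlc := (lpi_openq q k ℓ).continuous
  let j : SA m × SB k → SA m × LensSpace q k ℓ := fun p => (p.1, lpi q k ℓ p.2)
  have hj : Continuous j := by fun_prop
  obtain ⟨u, hu0, hu1, hu⟩ := exists_continuous_zero_one_of_isClosed
    (X := SA m × SB k) (hB.preimage hj).isClosed_compl (hA.preimage hj).isClosed_compl (by
      rw [Set.disjoint_left]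
      intro p h1 h2
      rcases hAB (j p) with h | h
      · exact h2 h
      · exact h1 h)
  let ρ : ZMod q → SA m × SB k → SA m × SB k := fun c p => (p.1, rotS q k ℓ c p.2)
  have hρ : ∀ c, Continuous (ρ c) := fun c => by have := cont_rotS q k ℓ c; fun_prop
  let w : SA m × SB k → ℝ := fun p => max 0 (2 * u p - 1)
  have hw : Continuous w := by fun_prop
  have hw0 : ∀ p, 0 ≤ w p := fun p => le_max_left _ _
  have hs0 : ∀ p, 0 ≤ ∑ c, w (ρ c p) := fun p => Finset.sum_nonneg fun c _ => hw0 _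
  refine ⟨fun p => min 1 (∑ c, w (ρ c p)), ?_, ?_, ?_, ?_, ?_, ?_⟩
  · refine continuous_const.min (continuous_finsetSum _ fun c _ => hw.comp (hρ c))
  · intro p; exact le_min zero_le_one (hs0 p)
  · intro p; exact min_le_left _ _
  · intro c x y
    change min 1 (∑ c', w (ρ c' (x, rotS q k ℓ c y))) = min 1 (∑ c', w (ρ c' (x, y)))
    congr 1
    have : ∀ c', w (ρ c' (x, rotS q k ℓ c y)) = w (ρ (c' + c) (x, y)) := fun c' => by
      simp [ρ, rotS_rotS]
    simp only [this]
    exact Fintype.sum_equiv (Equiv.addRight c) _ _ (fun _ => rfl)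
  · intro p hp
    apply min_eq_left
    have h1 : w (ρ 0 p) = 1 := by
      have : u p = 1 := hu1 hp
      simp [ρ, rotS_zero, w, this]; norm_num
    rw [← h1]
    exact Finset.single_le_sum (f := fun c => w (ρ c p)) (fun c _ => hw0 _) (Finset.mem_univ _)
  · intro p hp
    have : ∀ c, ∀ᶠ p' in 𝓝 p, w (ρ c p') = 0 := by
      intro c
      have h1 : u (ρ c p) = 0 := hu0 (by
        change (p.1, lpi q k ℓ (rotS q k ℓ c p.2)) ∉ B
        rw [lpi_rotS]; exact hp)
      have h2 : ∀ᶠ p' in 𝓝 p, u (ρ c p') < 1 / 2 := by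
        have hc : Continuous fun p' => u (ρ c p') := u.continuous.comp (hρ c)
        exact hc.continuousAt.eventually (gt_mem_nhds (show u (ρ c p) < 1 / 2 by rw [h1]; norm_num))
      filter_upwards [h2] with p' h
      exact max_eq_left (by linarith)
    filter_upwards [Filter.eventually_all.2 this] with p' h
    simp [h]

lemma exists_R (B : Set (SA m × LensSpace q k ℓ)) (hB : IsOpen B)
    (hn : ContinuousMap.Nullhomotopic (⟨Subtype.val, continuous_subtype_val⟩ : C(B, SA m × LensSpace q k ℓ)))
    (v : SA m × SB k → ℝ) (hv : Continuous v) (hv0 : ∀ p, 0 ≤ v p)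
    (hvi : ∀ c x y, v (x, rotS q k ℓ c y) = v (x, y))
    (hvB : ∀ p, (p.1, lpi q k ℓ p.2) ∉ B → ∀ᶠ p' in 𝓝 p, v p' = 0) :
    ∃ (R : ℝ × (SA m × SB k) → SA m) (c₀ : SA m), Continuous R ∧ (∀ τ p, τ ≤ 0 → R (τ, p) = c₀) ∧
      (∀ τ p, 1 ≤ τ → v p = 1 → R (τ, p) = p.1) ∧
      (∀ c x y τ, R (τ, (x, rotS q k ℓ c y)) = R (τ, (x, y))) := by
  classical
  have hlc := (lpi_openq q k ℓ).continuous
  obtain ⟨pt, ⟨F⟩⟩ := hn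
  let J : ℝ → unitInterval := fun s => Set.projIcc 0 1 zero_le_one (1 - s)
  have hJ : Continuous J := continuous_projIcc.comp (by fun_prop)
  have hJ0 : ∀ s, s ≤ 0 → J s = 1 := fun s hs => Set.projIcc_of_right_le _ (by linarith)
  have hJ1 : ∀ s, 1 ≤ s → J s = 0 := fun s hs => Set.projIcc_of_le_left _ (by linarith)
  let R : ℝ × (SA m × SB k) → SA m := fun z =>
    if h : (z.2.1, lpi q k ℓ z.2.2) ∈ B then (F (J (z.1 * v z.2), ⟨_, h⟩)).1 else pt.1
  have hRc : ∀ z, z.1 * v z.2 ≤ 0 → R z = pt.1 := by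
    intro z hz
    simp only [R]
    split_ifs with h
    · rw [hJ0 _ hz]; simp
    · rfl
  refine ⟨R, pt.1, ?_, ?_, ?_, ?_⟩
  · rw [continuous_iff_continuousAt]
    intro z
    by_cases h : (z.2.1, lpi q k ℓ z.2.2) ∈ B
    · let S : Set (ℝ × (SA m × SB k)) := {z | (z.2.1, lpi q k ℓ z.2.2) ∈ B}
      have hS : IsOpen S := hB.preimage (by fun_prop)
      have : ContinuousOn R S := by
        rw [continuousOn_iff_continuous_restrict]
        let jj : S → B := fun z => ⟨(z.1.2.1, lpi q k ℓ z.1.2.2), z.2⟩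
        have hjj : Continuous jj := by fun_prop
        have e : S.domRestrict R = fun z => (F (J (z.1.1 * v z.1.2), jj z)).1 := by
          funext z
          exact dif_pos z.2
        rw [e]
        fun_prop
      exact this.continuousAt (hS.mem_nhds h)
    · have h1 := hvB z.2 h
      have h2 : ∀ᶠ z' in 𝓝 z, v z'.2 = 0 := continuous_snd.continuousAt.eventually h1
      have h3 : R =ᶠ[𝓝 z] fun _ => pt.1 := by
        filter_upwards [h2] with z' hz
        exact hRc z' (by rw [hz, mul_zero])
      exact continuousAt_const.congr h3.symm
  · intro τ p hτ
    exact hRc _ (mul_nonpos_of_nonpos_of_nonneg hτ (hv0 p))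
  · intro τ p hτ hp
    have h : (p.1, lpi q k ℓ p.2) ∈ B := by
      by_contra h
      have := (hvB p h).self_of_nhds
      rw [hp] at this; norm_num at this
    simp only [R]
    rw [dif_pos h, hp, mul_one, hJ1 _ hτ]
    simp
  · intro c x y τ
    simp only [R, hvi, lpi_rotS]

/-- a default point of the sphere -/
noncomputable def nA0 : SA m := ⟨EuclideanSpace.single 0 1, by simp⟩

open Classical in
/-- normalisation -/
noncomputable def nA (a : EuclideanSpace ℝ (Fin (m + 1))) : SA m :=
  if h : a = 0 then nA0 m else ⟨‖a‖⁻¹ • a, by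
    rw [mem_sphere_zero_iff_norm, norm_smul, norm_inv, norm_norm]; exact inv_mul_cancel₀ (norm_ne_zero_iff.2 h)⟩

open Classical in
/-- normalisation -/
noncomputable def nB (b0 : SB k) (a : EuclideanSpace ℂ (Fin k)) : SB k :=
  if h : a = 0 then b0 else ⟨‖a‖⁻¹ • a, by
    rw [mem_sphere_zero_iff_norm, norm_smul, norm_inv, norm_norm]; exact inv_mul_cancel₀ (norm_ne_zero_iff.2 h)⟩

lemma nA_val (a : EuclideanSpace ℝ (Fin (m + 1))) (h : a ≠ 0) : (nA m a).1 = ‖a‖⁻¹ • a := by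
  rw [nA, dif_neg h]

lemma nB_val (b0 : SB k) (a : EuclideanSpace ℂ (Fin k)) (h : a ≠ 0) : (nB k b0 a).1 = ‖a‖⁻¹ • a := by
  rw [nB, dif_neg h]

lemma nA_cont (a : EuclideanSpace ℝ (Fin (m + 1))) (h : a ≠ 0) : ContinuousAt (nA m) a := by
  rw [Topology.IsInducing.subtypeVal.continuousAt_iff]
  have : (Subtype.val ∘ nA m) =ᶠ[𝓝 a] fun a => ‖a‖⁻¹ • a := by
    filter_upwards [isOpen_ne.mem_nhds h] with b hb using nA_val m b hb
  refine ContinuousAt.congr ?_ this.symm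
  exact (continuous_norm.continuousAt.inv₀ (norm_ne_zero_iff.2 h)).smul continuousAt_id

lemma nB_cont (b0 : SB k) (a : EuclideanSpace ℂ (Fin k)) (h : a ≠ 0) : ContinuousAt (nB k b0) a := by
  rw [Topology.IsInducing.subtypeVal.continuousAt_iff]
  have : (Subtype.val ∘ nB k b0) =ᶠ[𝓝 a] fun a => ‖a‖⁻¹ • a := by
    filter_upwards [isOpen_ne.mem_nhds h] with b hb using nB_val k b0 b hb
  refine ContinuousAt.congr ?_ this.symm
  exact (continuous_norm.continuousAt.inv₀ (norm_ne_zero_iff.2 h)).smul continuousAt_id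

lemma nB_rot (b0 : SB k) (c : ZMod q) (b : EuclideanSpace ℂ (Fin k)) (h : b ≠ 0) :
    nB k b0 (rot q k ℓ c b) = rotS q k ℓ c (nB k b0 b) := by
  have h' : rot q k ℓ c b ≠ 0 := by rwa [← norm_ne_zero_iff, norm_rot, norm_ne_zero_iff]
  apply Subtype.ext
  rw [nB_val _ _ _ h', norm_rot]
  simp only [rotS]
  rw [nB_val _ _ _ h, map_smul]

open Classical in
/-- labels -/
noncomputable def dl (a : EuclideanSpace ℝ (Fin (m + 1))) : ℕ :=
  if h : ∃ j : Fin (m + 1), 0 < a j then (h.choose : ℕ) else if ∑ i, a i < 0 then m + 1 else 0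

lemma dl_lt (a : EuclideanSpace ℝ (Fin (m + 1))) : dl m a < m + 2 := by
  rw [dl]; split_ifs with h h
  · have := h.choose.2; omega
  · omega
  · omega

lemma dl_eq (a : EuclideanSpace ℝ (Fin (m + 1))) (h0 : a ≠ 0) (j : Fin (m + 1)) (h : dl m a = j) :
    0 < a j := by
  rw [dl] at h; split_ifs at h with h1 h2
  · have := h1.choose_spec
    have e : h1.choose = j := Fin.ext h
    rwa [e] at this
  · have := j.2; omega
  · exfalso
    push Not at h1 h2
    apply h0
    have := (Finset.sum_eq_zero_iff_of_nonpos (s := Finset.univ) (fun i _ => h1 i)).1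
      (le_antisymm (Finset.sum_nonpos fun i _ => h1 i) h2)
    ext i; simpa using this i (Finset.mem_univ i)

lemma dl_eq_last (a : EuclideanSpace ℝ (Fin (m + 1))) (h : dl m a = m + 1) : ∑ i, a i < 0 := by
  rw [dl] at h; split_ifs at h with h1 h2
  · have := h1.choose.2; omega
  · exact h2

lemma lower (hk : 1 ≤ k) (hq2 : 2 ≤ q) (hℓ : ∀ j, IsCoprime (ℓ j) (q : ℤ))
    (U : ℕ → Set (SA m × LensSpace q k ℓ)) (hU : ∀ i, IsOpen (U i))
    (hn : ∀ i, ContinuousMap.Nullhomotopic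
      (⟨Subtype.val, continuous_subtype_val⟩ : C(U i, SA m × LensSpace q k ℓ)))
    (hc : ∀ z, ∃ i ≤ 2 * k - 1, z ∈ U i) : False := by
  have hlc := (lpi_openq q k ℓ).continuous
  choose T hTe hTo using fun i => liftT q m k ℓ hℓ (U i) (hU i) (hn i)
  let A : Set (SA m × LensSpace q k ℓ) := ⋃ i ∈ {i | i < 2 * k - 1}, U i
  obtain ⟨v, hvc, hv0, hv1, hvi, hvA, hvB⟩ := exists_v q m k ℓ A (U (2 * k - 1))
    (isOpen_biUnion fun i _ => hU i) (hU _) (by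
      intro z
      obtain ⟨i, hi, hz⟩ := hc z
      rcases hi.lt_or_eq with h | h
      · exact Or.inl (Set.mem_biUnion (show i ∈ {i | i < 2 * k - 1} from h) hz)
      · exact Or.inr (h ▸ hz))
  obtain ⟨R, c₀, hRc, hR0, hR1, hRi⟩ := exists_R q m k ℓ (U (2 * k - 1)) (hU _) (hn _) v hvc hv0 hvi hvB
  let b0 : SB k := ⟨EuclideanSpace.single ⟨0, hk⟩ 1, by simp⟩
  let N : EE m k → SA m × SB k := fun p => (nA m p.1, nB k b0 p.2)
  let lam : EE m k → ℝ := fun p => ‖p.1‖ / (‖p.1‖ + ‖p.2‖)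
  let s : EE m k → ℝ := fun p => max 0 (min 1 (4 * lam p - 2))
  let φ : EE m k → EuclideanSpace ℝ (Fin (m + 1)) := fun p =>
    (1 - s p) • (R (4 * lam p - 1, N p)).1 + s p • (nA m p.1).1
  have hne : ∀ p : EE m k, p ≠ 0 → ‖p.1‖ + ‖p.2‖ ≠ 0 := by
    intro p hp h
    apply hp
    have h1 := norm_nonneg p.1
    have h2 := norm_nonneg p.2
    exact Prod.ext (norm_eq_zero.1 (by linarith)) (norm_eq_zero.1 (by linarith))
  have hlam : ∀ p : EE m k, p ≠ 0 → ContinuousAt lam p := by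
    intro p hp
    exact ContinuousAt.div (by fun_prop) (by fun_prop) (hne p hp)
  have hs : ∀ p : EE m k, p ≠ 0 → ContinuousAt s p := by
    intro p hp
    have := hlam p hp
    fun_prop
  have hφ1 : ∀ p, lam p ≤ 1 / 2 → φ p = (R (4 * lam p - 1, N p)).1 := by
    intro p hp
    have : s p = 0 := max_eq_left ((min_le_right _ _).trans (by linarith))
    simp [φ, this]
  have hφ0 : ∀ p, lam p ≤ 1 / 4 → φ p = c₀.1 := by
    intro p hp
    rw [hφ1 p (by linarith), hR0 _ _ (by linarith)]
  have hφ2 : ∀ p, 3 / 4 ≤ lam p → φ p = (nA m p.1).1 := by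
    intro p hp
    have : s p = 1 := by
      have : min 1 (4 * lam p - 2) = 1 := min_eq_left (by linarith)
      simp [s, this]
    simp [φ, this]
  have hl0 : ∀ p : EE m k, p.1 = 0 → lam p = 0 := by intro p hp; simp [lam, hp]
  have hl1 : ∀ p : EE m k, p.1 ≠ 0 → p.2 = 0 → lam p = 1 := by
    intro p hp hp2; simp [lam, hp2, hp]
  have hNc : ∀ p : EE m k, p.1 ≠ 0 → p.2 ≠ 0 → ContinuousAt N p := by
    intro p h1 h2
    exact ((nA_cont m _ h1).comp continuousAt_fst).prodMk ((nB_cont k b0 _ h2).comp continuousAt_snd)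
  have hφc : ∀ p : EE m k, p ≠ 0 → ContinuousAt φ p := by
    intro p hp
    by_cases h1 : p.1 = 0
    · have e : φ =ᶠ[𝓝 p] fun _ => c₀.1 := by
        filter_upwards [(hlam p hp).eventually (gt_mem_nhds (show lam p < 1 / 4 by rw [hl0 p h1]; norm_num))]
          with p' h using hφ0 p' h.le
      exact continuousAt_const.congr e.symm
    by_cases h2 : p.2 = 0
    · have e : φ =ᶠ[𝓝 p] fun p => (nA m p.1).1 := by
        filter_upwards [(hlam p hp).eventually (lt_mem_nhds (show 3 / 4 < lam p by rw [hl1 p h1 h2]; norm_num))]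
          with p' h using hφ2 p' h.le
      refine ContinuousAt.congr ?_ e.symm
      exact continuous_subtype_val.continuousAt.comp ((nA_cont m _ h1).comp continuousAt_fst)
    · have hA := (nA_cont m _ h1).comp (continuousAt_fst (p := p))
      have hN := hNc p h1 h2
      have hl := hlam p hp
      have hs' := hs p hp
      have hR : ContinuousAt (fun p => R (4 * lam p - 1, N p)) p :=
        hRc.continuousAt.comp (f := fun p => (4 * lam p - 1, N p)) (by fun_prop)
      have hR' := continuous_subtype_val.continuousAt.comp hR
      have hA' := continuous_subtype_val.continuousAt.comp hA
      exact ((continuousAt_const.sub hs').smul hR').add (hs'.smul hA')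
  have hSA : ∀ x : SA m, x.1 ≠ 0 := by
    intro x h; have := x.2; simp [h] at this
  have hφi : ∀ c p, φ (gg q m k ℓ c p) = φ p := by
    intro c p
    have e1 : (gg q m k ℓ c p).1 = p.1 := rfl
    have e2 : (gg q m k ℓ c p).2 = rot q k ℓ c p.2 := rfl
    by_cases h : p.2 = 0
    · have : gg q m k ℓ c p = p := Prod.ext e1 (by rw [e2, h, map_zero])
      rw [this]
    · have e3 : lam (gg q m k ℓ c p) = lam p := by simp only [lam, e1, e2, norm_rot]
      have e4 : N (gg q m k ℓ c p) = ((N p).1, rotS q k ℓ c (N p).2) := by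
        simp only [N, e1, e2]; rw [nB_rot _ _ _ _ _ _ h]
      simp only [φ, s, e3, e4, e1, hRi]
  have hφz : ∀ p, p ≠ 0 → φ p = 0 → p.1 ≠ 0 ∧ p.2 ≠ 0 ∧ v (N p) ≠ 1 := by
    intro p hp h0
    have h1 : p.1 ≠ 0 := by
      intro h; rw [hφ0 p (by rw [hl0 p h]; norm_num)] at h0; exact hSA _ h0
    refine ⟨h1, ?_, ?_⟩
    · intro h; rw [hφ2 p (by rw [hl1 p h1 h]; norm_num)] at h0; exact hSA _ h0
    · intro h
      rcases le_total (lam p) (1 / 2) with hl | hl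
      · rw [hφ1 p hl] at h0; exact hSA _ h0
      · have : φ p = (nA m p.1).1 := by
          simp only [φ]
          rw [hR1 _ _ (by linarith) h]
          simp only [N]
          rw [← add_smul]; simp
        rw [this] at h0; exact hSA _ h0
  refine comb_contra q m k ℓ hq2 hk hℓ (fun p => dl m (φ p)) (fun i p => T i (N p)) ?_ ?_ ?_ ?_ ?_
  · intro p; exact dl_lt m _
  · intro c p; simp only [hφi]
  · intro i c p h
    have : N (gg q m k ℓ c p) = ((N p).1, rotS q k ℓ c (N p).2) := by
      change (nA m p.1, nB k b0 (rot q k ℓ c p.2)) = _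
      rw [nB_rot _ _ _ _ _ _ h]
    simp only [this, hTe]
  · intro p h2 h1
    have e : φ p = ‖p.1‖⁻¹ • p.1 := by
      rw [hφ2 p (by rw [hl1 p h1 h2]; norm_num), nA_val m _ h1]
    have hpos : 0 < ‖p.1‖⁻¹ := inv_pos.2 (norm_pos_iff.2 h1)
    constructor
    · intro h
      have := dl_eq m (φ p) (by rw [hφ2 p (by rw [hl1 p h1 h2]; norm_num)]; exact hSA _) ⟨_, h⟩ rfl
      rw [e] at this
      simp only [PiLp.smul_apply, smul_eq_mul] at this
      have h3 := (mul_pos_iff_of_pos_left hpos).1 this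
      simpa only [e] using h3
    · intro h
      have := dl_eq_last m (φ p) h
      rw [e] at this
      simp only [PiLp.smul_apply, smul_eq_mul, ← Finset.mul_sum] at this
      by_contra hcon
      push Not at hcon
      have := mul_nonneg hpos.le hcon
      linarith
  · intro p hp
    suffices h : ∃ W ∈ 𝓝 p, ((∃ i < m + 2, ∀ x ∈ W, dl m (φ x) ≠ i) ∨
        ∃ i < 2 * k - 1, ∃ c, ∀ x ∈ W, T i (N x) = c ∧ x.2 ≠ 0) by
      obtain ⟨W, hW, h⟩ := h
      obtain ⟨W', hs, ho, hm⟩ := mem_nhds_iff.1 hW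
      refine ⟨W', ho, hm, ?_⟩
      rcases h with ⟨i, hi, h⟩ | ⟨i, hi, c, h⟩
      · exact Or.inl ⟨i, hi, fun x hx => h x (hs hx)⟩
      · exact Or.inr ⟨i, hi, c, fun x hx => h x (hs hx)⟩
    by_cases h0 : φ p = 0
    · obtain ⟨h1, h2, h3⟩ := hφz p hp h0
      have hA : ((N p).1, lpi q k ℓ (N p).2) ∈ A := by
        by_contra h; exact h3 (hvA _ h)
      simp only [A, Set.mem_iUnion] at hA
      obtain ⟨i, hi, hA⟩ := hA
      refine ⟨N ⁻¹' {z | (z.1, lpi q k ℓ z.2) ∈ U i ∧ T i z = T i (N p)} ∩ {x | x.2 ≠ 0},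
        Filter.inter_mem ((hNc p h1 h2).preimage_mem_nhds ((hTo i _).mem_nhds ⟨hA, rfl⟩)) 
          ((isOpen_ne.preimage continuous_snd).mem_nhds h2), Or.inr ⟨i, hi, T i (N p), ?_⟩⟩
      intro x hx
      exact ⟨hx.1.2, hx.2⟩
    · by_cases hneg : ∃ j, φ p j < 0
      · obtain ⟨j, hj⟩ := hneg
        have hcj : ContinuousAt (fun x => φ x j) p :=
          (PiLp.continuous_apply 2 _ j).continuousAt.comp (hφc p hp)
        refine ⟨{x | φ x j < 0}, hcj.eventually (gt_mem_nhds hj), Or.inl ⟨j, by omega, ?_⟩⟩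
        intro x hx he
        have hx : φ x j < 0 := hx
        have := dl_eq m (φ x) (by rintro h; rw [h] at hx; simp at hx) j he
        linarith
      · push Not at hneg
        have hsum : 0 < ∑ i, φ p i := by
          have h := Finset.sum_nonneg (s := Finset.univ) fun i _ => hneg i
          rcases h.lt_or_eq with h | h
          · exact h
          · exfalso; apply h0
            have := (Finset.sum_eq_zero_iff_of_nonneg (s := Finset.univ) (fun i _ => hneg i)).1 h.symm
            ext i; simpa using this i (Finset.mem_univ i)
        have hcj : ContinuousAt (fun x => ∑ i, φ x i) p := by
          have : Continuous fun a : EuclideanSpace ℝ (Fin (m + 1)) => ∑ i, a i := by fun_prop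
          exact this.continuousAt.comp (hφc p hp)
        refine ⟨{x | 0 < ∑ i, φ x i}, hcj.eventually (lt_mem_nhds hsum), Or.inl ⟨m + 1, by omega, ?_⟩⟩
        intro x hx he
        have hx : 0 < ∑ i, φ x i := hx
        have := dl_eq_last m (φ x) he
        linarith

end lower
end LSLens

namespace LSLens

section generic
variable {X Y : Type*} [TopologicalSpace X] [TopologicalSpace Y]

/-- the set `S` is contractible in `X` to the point `x₀` (formulation for open sets) -/
def NHat (S : Set X) (x₀ : X) : Prop := ∃ F : unitInterval × X → X,
  (∀ t, ∀ s ∈ S, ContinuousAt F (t, s)) ∧ ∀ s ∈ S, F (0, s) = s ∧ F (1, s) = x₀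

lemma NHat.mono {S S' : Set X} {x₀ : X} (h : NHat S x₀) (hs : S' ⊆ S) : NHat S' x₀ := by
  obtain ⟨F, h1, h2⟩ := h
  exact ⟨F, fun t s hs' => h1 t s (hs hs'), fun s hs' => h2 s (hs hs')⟩

lemma NHat.homotopic {S : Set X} {x₀ : X} (h : NHat S x₀) :
    (⟨Subtype.val, continuous_subtype_val⟩ : C(S, X)).Homotopic (ContinuousMap.const S x₀) := by
  obtain ⟨F, h1, h2⟩ := h
  refine ⟨⟨⟨fun z => F (z.1, z.2.1), ?_⟩, ?_, ?_⟩⟩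
  · rw [continuous_iff_continuousAt]
    rintro ⟨t, s⟩
    exact (h1 t s.1 s.2).comp (f := fun z : unitInterval × S => (z.1, z.2.1)) (by fun_prop)
  · intro s; exact (h2 s.1 s.2).1
  · intro s; exact (h2 s.1 s.2).2

lemma nhat_of_homotopic {S : Set X} (hS : IsOpen S) {x₀ : X}
    (h : (⟨Subtype.val, continuous_subtype_val⟩ : C(S, X)).Homotopic (ContinuousMap.const S x₀)) :
    NHat S x₀ := by
  classical
  obtain ⟨H⟩ := h
  let F : unitInterval × X → X := fun z => if h : z.2 ∈ S then H (z.1, ⟨z.2, h⟩) else x₀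
  refine ⟨F, ?_, ?_⟩
  · intro t s hs
    let V : Set (unitInterval × X) := {z | z.2 ∈ S}
    have hV : IsOpen V := hS.preimage continuous_snd
    have : ContinuousOn F V := by
      rw [continuousOn_iff_continuous_restrict]
      let jj : V → S := fun z => ⟨z.1.2, z.2⟩
      have hjj : Continuous jj := by fun_prop
      have e : V.domRestrict F = fun z => H (z.1.1, jj z) := by
        funext z; exact dif_pos z.2
      rw [e]; fun_prop
    exact this.continuousAt (hV.mem_nhds hs)
  · intro s hs
    simp [F, hs]

lemma NHat.base [PathConnectedSpace X] {S : Set X} (hS : IsOpen S) {x₀ : X} (h : NHat S x₀) (x₁ : X) :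
    NHat S x₁ :=
  nhat_of_homotopic hS (h.homotopic.trans ⟨(PathConnectedSpace.somePath x₀ x₁).toHomotopyConst⟩)

lemma NHat.union {P Q : Set X} (hP : IsOpen P) (hQ : IsOpen Q) (hd : ∀ x, x ∈ P → x ∈ Q → False)
    {x₀ : X} (h : NHat P x₀) (h' : NHat Q x₀) : NHat (P ∪ Q) x₀ := by
  classical
  obtain ⟨F, h1, h2⟩ := h
  obtain ⟨F', h1', h2'⟩ := h'
  refine ⟨fun z => if z.2 ∈ P then F z else F' z, ?_, ?_⟩
  · rintro t s (hs | hs)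
    · refine (h1 t s hs).congr ?_
      filter_upwards [(hP.preimage continuous_snd).mem_nhds (show (t, s) ∈ _ from hs)] with z hz
      exact (if_pos hz).symm
    · refine (h1' t s hs).congr ?_
      filter_upwards [(hQ.preimage continuous_snd).mem_nhds (show (t, s) ∈ _ from hs)] with z hz
      exact (if_neg (fun h => hd _ h hz)).symm
  · rintro s (hs | hs)
    · simp [hs, h2 s hs]
    · have : s ∉ P := fun h => hd _ h hs
      simp [this, h2' s hs]

lemma NHat.prod {S : Set X} {T : Set Y} {x₀ : X} {y₀ : Y} (h : NHat S x₀) (h' : NHat T y₀) :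
    NHat (S ×ˢ T) (x₀, y₀) := by
  obtain ⟨F, h1, h2⟩ := h
  obtain ⟨F', h1', h2'⟩ := h'
  refine ⟨fun z => (F (z.1, z.2.1), F' (z.1, z.2.2)), ?_, ?_⟩
  · rintro t ⟨s, s'⟩ ⟨hs, hs'⟩
    exact ((h1 t s hs).comp (f := fun z : unitInterval × (X × Y) => (z.1, z.2.1))
        (x := (t, (s, s'))) (by fun_prop)).prodMk
      ((h1' t s' hs').comp (f := fun z : unitInterval × (X × Y) => (z.1, z.2.2))
        (x := (t, (s, s'))) (by fun_prop))
  · rintro ⟨s, s'⟩ ⟨hs, hs'⟩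
    simp [h2 s hs, h2' s' hs']

lemma combine [PathConnectedSpace X] [PathConnectedSpace Y] (N : ℕ) (α₀ α₁ : X → ℝ) (γ : ℕ → Y → ℝ)
    (h0 : Continuous α₀) (h1 : Continuous α₁) (hγ : ∀ s, Continuous (γ s))
    (p0 : ∀ x, 0 ≤ α₀ x) (p1 : ∀ x, 0 ≤ α₁ x) (pγ : ∀ s y, 0 ≤ γ s y)
    (h01 : ∀ x, 0 < α₀ x ∨ 0 < α₁ x) (hex : ∀ y, ∃ s ≤ N, 0 < γ s y) (hγ0 : ∀ y, γ 0 y = 0)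
    (hγN : ∀ y, γ (N + 1) y = 0)
    (n0 : ∃ x₀, NHat {x | 0 < α₀ x} x₀) (n1 : ∃ x₀, NHat {x | 0 < α₁ x} x₀)
    (nγ : ∀ s, ∃ y₀, NHat {y | 0 < γ s y} y₀) :
    ∃ U : Fin (N + 1) → Set (X × Y), (∀ i, IsOpen (U i)) ∧ (⋃ i, U i) = Set.univ ∧
      ∀ i, ContinuousMap.Nullhomotopic
        (⟨Subtype.val, continuous_subtype_val⟩ : C(U i, X × Y)) := by
  let P : ℕ → Set (X × Y) := fun s => {z | α₁ z.1 * γ s z.2 < α₀ z.1 * γ (s + 1) z.2}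
  let Q : ℕ → Set (X × Y) := fun s => {z | α₀ z.1 * γ (s + 1) z.2 < α₁ z.1 * γ s z.2}
  have hP : ∀ s, IsOpen (P s) := fun s => by
    have := hγ s; have := hγ (s + 1)
    exact isOpen_lt (by fun_prop) (by fun_prop)
  have hQ : ∀ s, IsOpen (Q s) := fun s => by
    have := hγ s; have := hγ (s + 1)
    exact isOpen_lt (by fun_prop) (by fun_prop)
  have hP' : ∀ s, P s ⊆ {x | 0 < α₀ x} ×ˢ {y | 0 < γ (s + 1) y} := by
    rintro s ⟨x, y⟩ h
    have h : α₁ x * γ s y < α₀ x * γ (s + 1) y := h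
    have h2 : 0 < α₀ x * γ (s + 1) y := (mul_nonneg (p1 x) (pγ s y)).trans_lt h
    exact ⟨pos_of_mul_pos_left h2 (pγ _ _), pos_of_mul_pos_right h2 (p0 _)⟩
  have hQ' : ∀ s, Q s ⊆ {x | 0 < α₁ x} ×ˢ {y | 0 < γ s y} := by
    rintro s ⟨x, y⟩ h
    have h : α₀ x * γ (s + 1) y < α₁ x * γ s y := h
    have h2 : 0 < α₁ x * γ s y := (mul_nonneg (p0 x) (pγ _ y)).trans_lt h
    exact ⟨pos_of_mul_pos_left h2 (pγ _ _), pos_of_mul_pos_right h2 (p1 _)⟩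
  refine ⟨fun i => P i ∪ Q i, fun i => (hP i).union (hQ i), ?_, ?_⟩
  · rw [Set.eq_univ_iff_forall]
    rintro ⟨x, y⟩
    by_contra hcon
    have heq : ∀ s ≤ N, α₁ x * γ s y = α₀ x * γ (s + 1) y := by
      intro s hs
      by_contra hne
      apply hcon
      rw [Set.mem_iUnion]
      refine ⟨⟨s, by omega⟩, ?_⟩
      rcases lt_or_gt_of_ne hne with h | h
      · exact Or.inl h
      · exact Or.inr h
    obtain ⟨s, hs, hpos⟩ := hex y
    rcases (p0 x).lt_or_eq with hx | hx
    · have : ∀ s ≤ N, γ s y = 0 := by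
        intro s
        induction s with
        | zero => intro _; exact hγ0 y
        | succ s ih =>
          intro hs
          have := heq s (by omega)
          rw [ih (by omega), mul_zero] at this
          rcases mul_eq_zero.1 this.symm with h | h
          · linarith
          · exact h
      rw [this s hs] at hpos; exact lt_irrefl _ hpos
    · have hx1 : 0 < α₁ x := by
        rcases h01 x with h | h
        · linarith
        · exact h
      have := heq s hs
      rw [← hx, zero_mul] at this
      have := mul_pos hx1 hpos
      linarith
  · intro i
    obtain ⟨x₀, n0⟩ := n0
    obtain ⟨x₁, n1⟩ := n1
    obtain ⟨y₀, m0⟩ := nγ (i + 1)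
    obtain ⟨y₁, m1⟩ := nγ i
    have a := (n0.prod m0).mono (hP' i)
    have b := ((n1.prod m1).mono (hQ' i)).base (hQ i) (x₀, y₀)
    refine ⟨(x₀, y₀), (a.union (hP i) (hQ i) ?_ b).homotopic⟩
    intro z h h'
    exact lt_asymm (show α₁ z.1 * γ i z.2 < α₀ z.1 * γ (i + 1) z.2 from h) h'

end generic
end LSLens

namespace LSLens

section concrete
variable (q m k : ℕ) [NeZero q] (ℓ : Fin k → ℤ)

lemma nA_of_sphere (x : SA m) : nA m x.1 = x := by
  have hx : ‖x.1‖ = 1 := mem_sphere_zero_iff_norm.1 x.2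
  have h : x.1 ≠ 0 := by rw [← norm_ne_zero_iff, hx]; norm_num
  apply Subtype.ext; rw [nA_val m _ h, hx]; simp

lemma nB_of_sphere (b0 x : SB k) : nB k b0 x.1 = x := by
  have hx : ‖x.1‖ = 1 := mem_sphere_zero_iff_norm.1 x.2
  have h : x.1 ≠ 0 := by rw [← norm_ne_zero_iff, hx]; norm_num
  apply Subtype.ext; rw [nB_val k _ _ h, hx]; simp

lemma nhat_SA (ε : ℝ) (hε : ε ^ 2 = 1) : ∃ x₀, NHat {x : SA m | 0 < 1 + ε * x.1 0} x₀ := by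
  let e : EuclideanSpace ℝ (Fin (m + 1)) := EuclideanSpace.single 0 ε
  have he : ‖e‖ = 1 := by
    simp only [e, PiLp.norm_single, Real.norm_eq_abs]
    exact (pow_eq_one_iff_of_nonneg (abs_nonneg ε) two_ne_zero).1 (by rw [sq_abs, hε])
  let f : unitInterval × SA m → EuclideanSpace ℝ (Fin (m + 1)) :=
    fun z => (1 - (z.1 : ℝ)) • z.2.1 + (z.1 : ℝ) • e
  have hf : Continuous f := by fun_prop
  refine ⟨nA m e, fun z => nA m (f z), ?_, ?_⟩
  · intro t x hx
    have hx : 0 < 1 + ε * x.1 0 := hx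
    refine (nA_cont m (f (t, x)) ?_).comp hf.continuousAt
    intro h0
    have hxn : ‖x.1‖ = 1 := mem_sphere_zero_iff_norm.1 x.2
    have h1 : (1 - (t : ℝ)) • x.1 = - ((t : ℝ) • e) := eq_neg_of_add_eq_zero_left h0
    have h2 := congrArg norm h1
    rw [norm_neg, norm_smul, norm_smul, he, hxn, Real.norm_of_nonneg (by linarith [t.2.2]),
      Real.norm_of_nonneg t.2.1] at h2
    have ht : (t : ℝ) = 1 / 2 := by linarith
    have h3 := congrArg (fun a : EuclideanSpace ℝ (Fin (m + 1)) => a 0) h1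
    simp [e, ht] at h3
    have h4 : x.1 0 = - ε := by linarith
    rw [h4] at hx
    nlinarith
  · intro x hx
    simp [f, nA_of_sphere]

/-- the twisting unit -/
noncomputable def eta (e : ℕ) : ℂ := if e = 0 then 1 else Complex.exp (Real.pi * Complex.I / q)

lemma eta_pow (e : ℕ) : (eta q e) ^ q = if e = 0 then 1 else -1 := by
  have hq : (q : ℂ) ≠ 0 := Nat.cast_ne_zero.2 (NeZero.ne q)
  unfold eta
  split_ifs
  · simp
  · rw [← Complex.exp_nat_mul, mul_div_cancel₀ _ hq, Complex.exp_pi_mul_I]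

lemma eta_ne (e : ℕ) : eta q e ≠ 0 := by
  unfold eta; split_ifs
  · simp
  · exact Complex.exp_ne_zero _

/-- the invariant coordinate -/
noncomputable def zt (j : Fin k) (e : ℕ) (z : SB k) : ℂ := (eta q e * z.1 j) ^ q

lemma chr_pow (c : ZMod q) : (ZMod.stdAddChar c : ℂ) ^ q = 1 := by
  rw [← AddChar.map_nsmul_eq_pow]; simp

lemma rotS_coord (c : ZMod q) (z : SB k) (j : Fin k) :
    (rotS q k ℓ c z).1 j = ZMod.stdAddChar (c * (ℓ j : ZMod q)) * z.1 j := rfl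

lemma zt_rot (j : Fin k) (e : ℕ) (c : ZMod q) (z : SB k) : zt q k j e (rotS q k ℓ c z) = zt q k j e z := by
  rw [zt, zt, rotS_coord, mul_pow, mul_pow, mul_pow, chr_pow, one_mul]

lemma cont_zt (j : Fin k) (e : ℕ) : Continuous (zt q k j e) := by
  unfold zt; fun_prop

/-- the bump -/
noncomputable def bet (j : Fin k) (e : ℕ) : LensSpace q k ℓ → ℝ :=
  Quot.lift (fun z => (zt q k j e z).re + ‖zt q k j e z‖) (by
    intro a b h
    obtain ⟨c, rfl⟩ := (lensRel_iff q k ℓ a b).1 h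
    simp only [zt_rot])

lemma bet_lpi (j : Fin k) (e : ℕ) (z : SB k) :
    bet q k ℓ j e (lpi q k ℓ z) = (zt q k j e z).re + ‖zt q k j e z‖ := rfl

lemma cont_bet (j : Fin k) (e : ℕ) : Continuous (bet q k ℓ j e) := by
  refine continuous_quot_lift _ ?_
  have := cont_zt q k j e
  fun_prop

lemma bet_nonneg (j : Fin k) (e : ℕ) (l : LensSpace q k ℓ) : 0 ≤ bet q k ℓ j e l := by
  obtain ⟨z, rfl⟩ := (lpi_openq q k ℓ).surjective l
  rw [bet_lpi]
  have := Complex.abs_re_le_norm (zt q k j e z)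
  have := neg_abs_le (zt q k j e z).re
  linarith

lemma slit_of_pos (ζ : ℂ) (h : 0 < ζ.re + ‖ζ‖) : ζ ∈ Complex.slitPlane := by
  rw [Complex.mem_slitPlane_iff]
  by_contra! hc
  have : ζ = (ζ.re : ℂ) := by apply Complex.ext <;> simp [hc.2]
  rw [this, Complex.norm_real, Real.norm_eq_abs, Complex.ofReal_re, abs_of_nonpos hc.1] at h
  linarith

lemma re_root_pos (hq2 : 2 ≤ q) (ζ : ℂ) (h : ζ ∈ Complex.slitPlane) : 0 < (ζ ^ ((q : ℂ)⁻¹)).re := by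
  obtain ⟨ha, h0⟩ := Complex.mem_slitPlane_iff_arg.1 h
  have hq : (2 : ℝ) ≤ q := by exact_mod_cast hq2
  have hqi : ((q : ℂ)⁻¹) = (((q : ℝ)⁻¹ : ℝ) : ℂ) := by push_cast; rfl
  rw [Complex.cpow_def_of_ne_zero h0, Complex.exp_re]
  refine mul_pos (Real.exp_pos _) ?_
  have him : (Complex.log ζ * (q : ℂ)⁻¹).im = ζ.arg * (q : ℝ)⁻¹ := by
    rw [hqi, Complex.im_mul_ofReal, Complex.log_im]
  rw [him]
  have h1 := Complex.neg_pi_lt_arg ζ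
  have h2 := lt_of_le_of_ne (Complex.arg_le_pi ζ) ha
  have hi : (0 : ℝ) < (q : ℝ)⁻¹ := by positivity
  have hi2 : (q : ℝ)⁻¹ ≤ 1 / 2 := by rw [inv_le_comm₀ (by positivity) (by norm_num)]; norm_num; exact hq2
  apply Real.cos_pos_of_mem_Ioo
  constructor <;> nlinarith [Real.pi_pos]

/-- the phase -/
noncomputable def xi (j : Fin k) (e : ℕ) (z : SB k) : ℂ := z.1 j / (zt q k j e z) ^ ((q : ℂ)⁻¹)

lemma xi_rot (j : Fin k) (e : ℕ) (c : ZMod q) (z : SB k) :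
    xi q k j e (rotS q k ℓ c z) = ZMod.stdAddChar (c * (ℓ j : ZMod q)) * xi q k j e z := by
  rw [xi, xi, zt_rot, rotS_coord, mul_div_assoc]

lemma exists_c (hℓ : ∀ j, IsCoprime (ℓ j) (q : ℤ)) (j : Fin k) (w : ℂ) (hw : w ^ q = 1) :
    ∃ c : ZMod q, ZMod.stdAddChar (c * (ℓ j : ZMod q)) = w := by
  obtain ⟨i, hi, h⟩ := (Complex.isPrimitiveRoot_exp q (NeZero.ne q)).eq_pow_of_pow_eq_one hw
  obtain ⟨a, b, hab⟩ := hℓ j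
  have hab' : (a : ZMod q) * (ℓ j : ZMod q) = 1 := by
    have := congrArg (Int.cast : ℤ → ZMod q) hab
    push_cast at this
    simpa using this
  refine ⟨i * a, ?_⟩
  rw [mul_assoc, hab', mul_one, ← h, ← Complex.exp_nat_mul]
  have := ZMod.stdAddChar_coe (N := q) (i : ℤ)
  push_cast at this
  rw [this]; congr 1; ring

lemma nhat_bet (hq2 : 2 ≤ q) (hℓ : ∀ j, IsCoprime (ℓ j) (q : ℤ)) (j : Fin k) (e : ℕ) :
    ∃ y₀, NHat {l : LensSpace q k ℓ | 0 < bet q k ℓ j e l} y₀ := by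
  have hq0 : q ≠ 0 := NeZero.ne q
  let b0 : SB k := ⟨EuclideanSpace.single j 1, by simp⟩
  let f : unitInterval × SB k → EuclideanSpace ℂ (Fin k) :=
    fun w => (1 - (w.1 : ℝ)) • w.2.1 + (w.1 : ℝ) • EuclideanSpace.single j (xi q k j e w.2)
  have hslit : ∀ z : SB k, 0 < bet q k ℓ j e (lpi q k ℓ z) → zt q k j e z ∈ Complex.slitPlane := by
    intro z hz; exact slit_of_pos _ hz
  have hr0 : ∀ z : SB k, 0 < bet q k ℓ j e (lpi q k ℓ z) → (zt q k j e z) ^ ((q : ℂ)⁻¹) ≠ 0 := by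
    intro z hz h
    have := re_root_pos q hq2 _ (hslit z hz)
    rw [h] at this; simp at this
  have hfc : ∀ t z, 0 < bet q k ℓ j e (lpi q k ℓ z) → ContinuousAt f (t, z) := by
    intro t z hz
    have h1 : ContinuousAt (xi q k j e) z := by
      refine ContinuousAt.div (by fun_prop) ?_ (hr0 z hz)
      exact (cont_zt q k j e).continuousAt.cpow continuousAt_const (hslit z hz)
    have h2 : ContinuousAt (fun w : unitInterval × SB k => xi q k j e w.2) (t, z) :=
      ContinuousAt.comp (f := fun w : unitInterval × SB k => w.2) (x := (t, z)) h1 continuousAt_snd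
    have h3 : Continuous (fun w : ℂ => (EuclideanSpace.single j w : EuclideanSpace ℂ (Fin k))) := by
      have := (LinearMap.continuous_of_finiteDimensional
        ((LinearMap.toSpanSingleton ℂ (EuclideanSpace ℂ (Fin k)) (EuclideanSpace.single j 1))))
      convert this using 2 with w
      ext i
      simp [Pi.single_apply]
    have h4 := h3.continuousAt.comp h2
    have h5 : ContinuousAt (fun w : unitInterval × SB k => (1 - (w.1 : ℝ)) • w.2.1) (t, z) := by fun_prop
    have h6 : ContinuousAt (fun w : unitInterval × SB k => (w.1 : ℝ)) (t, z) := by fun_prop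
    exact h5.add (h6.smul h4)
  have hf0 : ∀ t z, 0 < bet q k ℓ j e (lpi q k ℓ z) → f (t, z) ≠ 0 := by
    intro t z hz h0
    have h1 := congrArg (fun a : EuclideanSpace ℂ (Fin k) => a j) h0
    set r := (zt q k j e z) ^ ((q : ℂ)⁻¹) with hr
    have hrp : 0 < r.re := re_root_pos q hq2 _ (hslit z hz)
    have hzj : z.1 j ≠ 0 := by
      intro h
      have : zt q k j e z = 0 := by rw [zt, h, mul_zero, zero_pow hq0]
      exact Complex.slitPlane_ne_zero (hslit z hz) this
    have hxi : xi q k j e z = z.1 j / r := rfl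
    have hx0 : xi q k j e z ≠ 0 := by rw [hxi]; exact div_ne_zero hzj (hr0 z hz)
    have hz' : z.1 j = xi q k j e z * r := by rw [hxi, div_mul_cancel₀ _ (hr0 z hz)]
    have h2 : (1 - (t : ℝ)) • z.1 j + (t : ℝ) • xi q k j e z = 0 := by
      simpa [f] using h1
    rw [hz'] at h2
    have h3 : xi q k j e z * ((1 - (t : ℝ)) • r + ((t : ℝ) : ℂ)) = 0 := by
      rw [← h2]; simp only [Complex.real_smul]; ring
    have h4 := (mul_eq_zero.1 h3).resolve_left hx0
    have h5 := congrArg Complex.re h4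
    simp only [Complex.add_re, Complex.smul_re, Complex.ofReal_re, Complex.zero_re, smul_eq_mul] at h5
    have ht0 := t.2.1
    have ht1 := t.2.2
    have := mul_nonneg (sub_nonneg.2 ht1) hrp.le
    have ht : (t : ℝ) = 0 := by linarith
    rw [ht] at h5; linarith
  have hfe : ∀ t z c, f (t, rotS q k ℓ c z) = rot q k ℓ c (f (t, z)) := by
    intro t z c
    simp only [f, map_add, map_smul, xi_rot]
    congr 2
    ext i
    rw [rot_apply]
    by_cases h : i = j
    · subst h; simp
    · simp [h]
  let G : unitInterval × SB k → LensSpace q k ℓ := fun w => lpi q k ℓ (nB k b0 (f w))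
  let F : unitInterval × LensSpace q k ℓ → LensSpace q k ℓ := fun w => G (w.1, Quot.out w.2)
  have hFG : ∀ t z, 0 < bet q k ℓ j e (lpi q k ℓ z) → F (t, lpi q k ℓ z) = G (t, z) := by
    intro t z hz
    obtain ⟨c, hc⟩ := (lpi_eq_iff q k ℓ (Quot.out (lpi q k ℓ z)) z).1 (Quot.out_eq (lpi q k ℓ z))
    simp only [F, G]
    rw [← hc, hfe, nB_rot _ _ _ _ _ _ (hf0 t z hz), lpi_rotS]
  let e0 : SB k := nB k b0 (EuclideanSpace.single j (eta q e)⁻¹)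
  refine ⟨lpi q k ℓ e0, F, ?_, ?_⟩
  · intro t l hl
    obtain ⟨z, rfl⟩ := (lpi_openq q k ℓ).surjective l
    have hl : 0 < bet q k ℓ j e (lpi q k ℓ z) := hl
    have ho : IsOpenQuotientMap (Prod.map (id : unitInterval → unitInterval) (lpi q k ℓ)) :=
      IsOpenQuotientMap.id.prodMap (lpi_openq q k ℓ)
    have := ho.continuousAt_comp_iff (g := F) (x := (t, z))
    refine this.1 ?_
    have hG : ContinuousAt G (t, z) :=
      (lpi_openq q k ℓ).continuous.continuousAt.comp
        ((nB_cont k b0 _ (hf0 t z hl)).comp (hfc t z hl))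
    refine hG.congr ?_
    have hopen : IsOpen {w : unitInterval × SB k | 0 < bet q k ℓ j e (lpi q k ℓ w.2)} := by
      have h1 := cont_bet q k ℓ j e
      have h2 := (lpi_openq q k ℓ).continuous
      exact isOpen_lt continuous_const (by fun_prop)
    filter_upwards [hopen.mem_nhds hl] with w hw
    exact (hFG w.1 w.2 hw).symm
  · intro l hl
    obtain ⟨z, rfl⟩ := (lpi_openq q k ℓ).surjective l
    have hl : 0 < bet q k ℓ j e (lpi q k ℓ z) := hl
    rw [hFG _ _ hl, hFG _ _ hl]
    constructor
    · simp [G, f, nB_of_sphere]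
    · have hf1 : f (1, z) = EuclideanSpace.single j (xi q k j e z) := by simp [f]
      simp only [G, hf1]
      have hzj : z.1 j ≠ 0 := by
        intro h
        have : zt q k j e z = 0 := by rw [zt, h, mul_zero, zero_pow hq0]
        exact Complex.slitPlane_ne_zero (hslit z hl) this
      have hw : (eta q e * xi q k j e z) ^ q = 1 := by
        rw [xi, ← mul_div_assoc, div_pow, Complex.cpow_nat_inv_pow _ hq0]
        exact div_self (Complex.slitPlane_ne_zero (hslit z hl))
      obtain ⟨c, hc⟩ := exists_c q k ℓ hℓ j _ hw
      have e1 : EuclideanSpace.single j (xi q k j e z) = rot q k ℓ c (EuclideanSpace.single j (eta q e)⁻¹) := by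
        ext i
        rw [rot_apply]
        by_cases h : i = j
        · subst h
          rw [hc]
          have := eta_ne q e
          simp; field_simp
        · simp [h]
      rw [e1, nB_rot _ _ _ _ _ _ (by simp [eta_ne]), lpi_rotS]

lemma pc_SA (hm : 1 ≤ m) : PathConnectedSpace (SA m) := by
  rw [← isPathConnected_iff_pathConnectedSpace]
  refine isPathConnected_sphere ?_ _ zero_le_one
  rw [← Module.finrank_eq_rank, finrank_euclideanSpace_fin]
  exact_mod_cast (by omega : 1 < m + 1)

lemma pc_L (hk : 1 ≤ k) : PathConnectedSpace (LensSpace q k ℓ) := by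
  haveI : PathConnectedSpace (SB k) := by
    rw [← isPathConnected_iff_pathConnectedSpace]
    refine isPathConnected_sphere ?_ _ zero_le_one
    rw [← Module.finrank_eq_rank, finrank_real_of_complex, finrank_euclideanSpace_fin]
    exact_mod_cast (by omega : 1 < 2 * k)
  exact (lpi_openq q k ℓ).surjective.pathConnectedSpace (lpi_openq q k ℓ).continuous

lemma upper (hk : 1 ≤ k) (hm : 1 ≤ m) (hq2 : 2 ≤ q) (hℓ : ∀ j, IsCoprime (ℓ j) (q : ℤ)) :
    ∃ U : Fin (2 * k + 1) → Set (SA m × LensSpace q k ℓ), (∀ i, IsOpen (U i)) ∧ (⋃ i, U i) = Set.univ ∧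
      ∀ i, ContinuousMap.Nullhomotopic
        (⟨Subtype.val, continuous_subtype_val⟩ : C(U i, SA m × LensSpace q k ℓ)) := by
  haveI := pc_SA m hm
  haveI := pc_L q k ℓ hk
  have hx1 : ∀ x : SA m, |x.1 0| ≤ 1 := by
    intro x
    have hxn : ‖x.1‖ = 1 := mem_sphere_zero_iff_norm.1 x.2
    rw [← hxn]; exact PiLp.norm_apply_le x.1 0
  let γ : ℕ → LensSpace q k ℓ → ℝ := fun s l =>
    if h : 1 ≤ s ∧ s ≤ 2 * k then bet q k ℓ ⟨(s - 1) / 2, by omega⟩ ((s - 1) % 2) l else 0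
  have hγ : ∀ s, (1 ≤ s ∧ s ≤ 2 * k ∧ ∃ j e, γ s = bet q k ℓ j e) ∨ γ s = 0 := by
    intro s
    by_cases h : 1 ≤ s ∧ s ≤ 2 * k
    · refine Or.inl ⟨h.1, h.2, ⟨(s - 1) / 2, by omega⟩, (s - 1) % 2, ?_⟩
      · funext l; simp only [γ]; rw [dif_pos h]
    · refine Or.inr ?_
      funext l; simp only [γ]; rw [dif_neg h]; rfl
  refine combine (2 * k) (fun x : SA m => 1 + 1 * x.1 0) (fun x : SA m => 1 + (-1) * x.1 0) γ
    (by fun_prop) (by fun_prop) ?_ ?_ ?_ ?_ ?_ ?_ ?_ ?_ (nhat_SA m 1 (by norm_num)) (nhat_SA m (-1) (by norm_num)) ?_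
  · intro s
    rcases hγ s with ⟨_, _, j, e, h⟩ | h
    · rw [h]; exact cont_bet q k ℓ j e
    · rw [h]; exact continuous_const
  · intro x; have := abs_le.1 (hx1 x); linarith
  · intro x; have := abs_le.1 (hx1 x); linarith
  · intro s y
    rcases hγ s with ⟨_, _, j, e, h⟩ | h
    · rw [h]; exact bet_nonneg q k ℓ j e y
    · rw [h]; simp
  · intro x
    rcases le_total 0 (x.1 0) with h | h
    · left; linarith
    · right; linarith
  · intro y
    obtain ⟨z, rfl⟩ := (lpi_openq q k ℓ).surjective y
    have hz : ∃ j, z.1 j ≠ 0 := by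
      by_contra! hn
      have h0 : z.1 = 0 := by ext j; simpa using hn j
      have := z.2; simp [h0] at this
    obtain ⟨j, hj⟩ := hz
    have hsum : 0 < bet q k ℓ j 0 (lpi q k ℓ z) + bet q k ℓ j 1 (lpi q k ℓ z) := by
      rw [bet_lpi, bet_lpi]
      have e0 : zt q k j 0 z = z.1 j ^ q := by rw [zt, mul_pow, eta_pow]; simp
      have e1 : zt q k j 1 z = - z.1 j ^ q := by rw [zt, mul_pow, eta_pow]; simp
      rw [e0, e1, Complex.neg_re, norm_neg]
      have : 0 < ‖z.1 j ^ q‖ := norm_pos_iff.2 (pow_ne_zero _ hj)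
      linarith
    have hg : ∀ e < 2, γ (2 * j + e + 1) = bet q k ℓ j e := by
      intro e he
      funext l
      have hj2 := j.2
      simp only [γ]
      rw [dif_pos ⟨by omega, by omega⟩]
      have a1 : (2 * (j : ℕ) + e + 1 - 1) % 2 = e := by omega
      have a2 : (⟨(2 * (j : ℕ) + e + 1 - 1) / 2, by omega⟩ : Fin k) = j := Fin.ext (by simp; omega)
      rw [a1, a2]
    have hj2 := j.2
    rcases (bet_nonneg q k ℓ j 0 (lpi q k ℓ z)).lt_or_eq with h | h
    · exact ⟨2 * j + 0 + 1, by omega, by rw [hg 0 (by omega)]; exact h⟩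
    · exact ⟨2 * j + 1 + 1, by omega, by rw [hg 1 (by omega)]; linarith⟩
  · intro y; simp [γ]
  · intro y; simp [γ]
  · intro s
    rcases hγ s with ⟨_, _, j, e, h⟩ | h
    · rw [h]; exact nhat_bet q k ℓ hq2 hℓ j e
    · rw [h]
      obtain ⟨y⟩ : Nonempty (LensSpace q k ℓ) := inferInstance
      exact ⟨y, fun w => w.2, by simp, by simp⟩

end concrete
end LSLens

/-- For odd `n = 2k-1`, `q ≥ 2` and `1 ≤ m ≤ n`, `cat (S^m × L^n_q) = n + 1`, where `S^m` is
the unit sphere in `ℝ^{m+1}`. -/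
theorem lsCat_prod_sphere_lensSpace (k : ℕ) (hk : 1 ≤ k) (n : ℕ) (hn : n = 2 * k - 1)
    (q : ℕ) (hq2 : 2 ≤ q) (m : ℕ) (hm1 : 1 ≤ m) (hmn : m ≤ n)
    (ℓ : Fin k → ℤ) (hℓ : ∀ j, IsCoprime (ℓ j) (q : ℤ)) :
    lsCat (↥(Metric.sphere (0 : EuclideanSpace ℝ (Fin (m + 1))) 1) × LensSpace q k ℓ) = n + 1 := by
  haveI : NeZero q := ⟨by omega⟩
  subst hn
  have hu := LSLens.upper q m k ℓ hk hm1 hq2 hℓ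
  have hmem : (2 * k - 1 + 1) ∈ {k' : ℕ | ∃ U : Fin (k' + 1) →
      Set (↥(Metric.sphere (0 : EuclideanSpace ℝ (Fin (m + 1))) 1) × LensSpace q k ℓ),
      (∀ i, IsOpen (U i)) ∧ (⋃ i, U i) = Set.univ ∧ ∀ i, ContinuousMap.Nullhomotopic
      (⟨Subtype.val, continuous_subtype_val⟩ :
        C(U i, ↥(Metric.sphere (0 : EuclideanSpace ℝ (Fin (m + 1))) 1) × LensSpace q k ℓ))} := by
    rw [show 2 * k - 1 + 1 = 2 * k by omega]
    exact hu
  refine le_antisymm (Nat.sInf_le hmem) (le_csInf ⟨_, hmem⟩ ?_)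
  rintro N ⟨U, hU, hc, hn⟩
  by_contra hlt
  push Not at hlt
  refine LSLens.lower q m k ℓ hk hq2 hℓ (fun i => U ⟨min i N, by omega⟩) (fun i => hU _)
    (fun i => hn _) ?_
  intro z
  have hz : z ∈ ⋃ i, U i := by rw [hc]; trivial
  obtain ⟨i, hi⟩ := Set.mem_iUnion.1 hz
  refine ⟨i, by have := i.2; omega, ?_⟩
  have : (⟨min (i : ℕ) N, by omega⟩ : Fin (N + 1)) = i := Fin.ext (by simp; have := i.2; omega)
  simpa only [this] using hi
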